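/- arXiv:1110.5373 — 5 statements merged into one kernel-verified Lean document; each statement's English description precedes it below -/
import Mathlib

section
/- Let A be a d×d self-adjoint (Hermitian) matrix and B a rank-one negative semidefinite self-adjoint d×d matrix. Then for every n, λ_{n−1}(A−B) ≤ λ_n(A) (for n ≥ 2) and λ_n(A) ≤ λ_n(A−B). Moreover, both inequalities are strict if and only if λ_n(A) is a simple eigenvalue of A and its eigenvector is not in the null-space of B. -/
open Matrix

/-- The eigenvalues of a Hermitian matrix, sorted in increasing order and counted with
multiplicity (junk value `0` if the matrix is not Hermitian). -/
noncomputable def sortedEigs {𝕜 : Type*} [RCLike 𝕜] {d : ℕ} (M : Matrix (Fin d) (Fin d) 𝕜) :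
    Fin d → ℝ :=
  if h : M.IsHermitian then h.eigenvalues ∘ Tuple.sort h.eigenvalues else 0

/-!
For `v` of norm one, `⟪v, M v⟫` is an average of eigenvalues of `M`, at most the `n`-th if `v` is
orthogonal to the eigenvectors of larger index and at least the `n`-th if it is orthogonal to those
of smaller index. If `⟪v, M v⟫ ≤ ⟪v, N v⟫` outside `r` linear constraints, counting dimensions gives
a vector comparing the `i`-th eigenvalue of `M` with the `(i + r)`-th of `N`. For `C = A + w w*` the
pair `(A, C)` needs no constraint, and `(C, A)` only `v ⟂ w`.

Both inequalities at `λ = λ_n(A)` are strict iff `λ` is not an eigenvalue of `C`. If `A u = λ u` and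
`C v = λ v`, pairing the second equation with `u` gives `⟪w, v⟫ ⟪u, w⟫ = 0`; so `λ` is an eigenvalue
of `C` iff some `λ`-eigenvector of `A` is orthogonal to `w`. If there is none, `⟪w, ·⟫` is injective
on the eigenspace, which is therefore a line.
-/

open Module Module.End

theorem notMem_range_iff_forall_lt_and_lt {ι α : Type*} [LinearOrder ι] [PartialOrder α]
    {f : ι → α} (hf : Monotone f) {a : α} {n : ι} (hlt : ∀ m < n, f m ≤ a) (hn : a ≤ f n) :
    a ∉ Set.range f ↔ (∀ m < n, f m < a) ∧ a < f n := by
  refine ⟨fun ha => ⟨fun m hm => (hlt m hm).lt_of_ne fun h => ha ⟨m, h⟩,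
    hn.lt_of_ne fun h => ha ⟨n, h.symm⟩⟩, ?_⟩
  rintro ⟨hlt', hn'⟩ ⟨i, rfl⟩
  rcases lt_or_ge i n with hi | hi
  · exact (hlt' i hi).false
  · exact (hn'.trans_le (hf hi)).false

theorem forall_lt_lt_iff_of_covBy {ι α : Type*} [LinearOrder ι] [Preorder α] {f : ι → α}
    (hf : Monotone f) {a : α} {m n : ι} (hmn : m ⋖ n) : (∀ k < n, f k < a) ↔ f m < a :=
  ⟨fun h => h m hmn.lt, fun h _ hk => (hf (hmn.le_of_lt hk)).trans_lt h⟩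

theorem finrank_span_image_le_card {K V ι : Type*} [DivisionRing K] [AddCommGroup V] [Module K V]
    (f : ι → V) (s : Finset ι) : finrank K (Submodule.span K (f '' s)) ≤ s.card := by
  classical
  rw [← Finset.coe_image]
  exact (finrank_span_finset_le_card _).trans Finset.card_image_le

section Rayleigh

variable {𝕜 E ι : Type*} [RCLike 𝕜] [NormedAddCommGroup E] [InnerProductSpace 𝕜 E] [Fintype ι]
  {T S : E →ₗ[𝕜] E} {v : E}

theorem re_inner_map_self_eq_sum {b : OrthonormalBasis ι 𝕜 E} {μ : ι → ℝ}
    (hb : ∀ i, T (b i) = (μ i : 𝕜) • b i) (v : E) :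
    RCLike.re (inner 𝕜 v (T v)) = ∑ i, μ i * ‖inner 𝕜 (b i) v‖ ^ 2 := by
  have hTv : T v = ∑ i, (inner 𝕜 (b i) v * μ i) • b i := by
    conv_lhs => rw [← b.sum_repr' v]
    simp only [map_sum, map_smul, hb, smul_smul]
  rw [hTv, inner_sum, map_sum]
  refine Finset.sum_congr rfl fun i _ => ?_
  rw [inner_smul_right, mul_right_comm, ← inner_conj_symm v, RCLike.mul_conj, ← RCLike.ofReal_pow,
    ← RCLike.ofReal_mul, RCLike.ofReal_re, mul_comm]

theorem re_inner_map_self_le {b : OrthonormalBasis ι 𝕜 E} {μ : ι → ℝ}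
    (hb : ∀ i, T (b i) = (μ i : 𝕜) • b i) {c : ℝ} (hv : ∀ i, c < μ i → inner 𝕜 (b i) v = 0) :
    RCLike.re (inner 𝕜 v (T v)) ≤ c * ‖v‖ ^ 2 := by
  rw [re_inner_map_self_eq_sum hb, ← b.sum_sq_norm_inner_right v, Finset.mul_sum]
  refine Finset.sum_le_sum fun i _ => ?_
  rcases lt_or_ge c (μ i) with hi | hi
  · simp [hv i hi]
  · gcongr

theorem le_re_inner_map_self {b : OrthonormalBasis ι 𝕜 E} {μ : ι → ℝ}
    (hb : ∀ i, T (b i) = (μ i : 𝕜) • b i) {c : ℝ} (hv : ∀ i, μ i < c → inner 𝕜 (b i) v = 0) :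
    c * ‖v‖ ^ 2 ≤ RCLike.re (inner 𝕜 v (T v)) := by
  have h := re_inner_map_self_le (T := -T) (b := b) (μ := -μ) (c := -c) (v := v)
    (fun i => by simp [hb]) fun i hi => hv i (neg_lt_neg_iff.mp hi)
  simpa using h

theorem exists_mem_orthogonal_ne_zero [FiniteDimensional 𝕜 E] {K : Submodule 𝕜 E}
    (hK : finrank 𝕜 K < finrank 𝕜 E) : ∃ v ∈ Kᗮ, v ≠ 0 :=
  (Kᗮ).exists_mem_ne_zero_of_ne_bot fun h =>
    hK.ne (by rw [K.orthogonal_eq_bot_iff.mp h, finrank_top])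

/- A nonzero `v` orthogonal to `K`, to every `b k` with `k < i` and to every `c k` with `j < k`
exists, since these span a subspace of dimension at most `finrank K + i + (d - 1 - j) < d`. -/
theorem eigenvalue_le_of_re_inner_map_self_le {d : ℕ} {b c : OrthonormalBasis (Fin d) 𝕜 E}
    {μ ν : Fin d → ℝ} (hμ : Monotone μ) (hν : Monotone ν)
    (hb : ∀ i, T (b i) = (μ i : 𝕜) • b i) (hc : ∀ i, S (c i) = (ν i : 𝕜) • c i)
    {K : Submodule 𝕜 E}
    (hTS : ∀ v ∈ Kᗮ, RCLike.re (inner 𝕜 v (T v)) ≤ RCLike.re (inner 𝕜 v (S v)))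
    {i j : Fin d} (hij : i + finrank 𝕜 K ≤ j) : μ i ≤ ν j := by
  have : FiniteDimensional 𝕜 E := b.toBasis.finiteDimensional_of_finite
  let L := Submodule.span 𝕜 (b '' Finset.Iio i)
  let U := Submodule.span 𝕜 (c '' Finset.Ioi j)
  have hL : finrank 𝕜 L ≤ i :=
    (finrank_span_image_le_card _ _).trans_eq (Fin.card_Iio i)
  have hU : finrank 𝕜 U ≤ d - 1 - j :=
    (finrank_span_image_le_card _ _).trans_eq (Fin.card_Ioi j)
  have hdim : finrank 𝕜 ↥(K ⊔ L ⊔ U) < finrank 𝕜 E := by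
    have := Submodule.finrank_add_le_finrank_add_finrank K L
    have := Submodule.finrank_add_le_finrank_add_finrank (K ⊔ L) U
    have := finrank_eq_card_basis b.toBasis
    rw [Fintype.card_fin] at this
    omega
  obtain ⟨v, hv, hv₀⟩ := exists_mem_orthogonal_ne_zero hdim
  simp only [← Submodule.inf_orthogonal, Submodule.mem_inf] at hv
  obtain ⟨⟨hvK, hvL⟩, hvU⟩ := hv
  refine le_of_mul_le_mul_right ?_ (by positivity : 0 < ‖v‖ ^ 2)
  calc
    μ i * ‖v‖ ^ 2 ≤ RCLike.re (inner 𝕜 v (T v)) := le_re_inner_map_self hb fun k hk =>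
      hvL _ (Submodule.subset_span ⟨k, by simpa using hμ.reflect_lt hk, rfl⟩)
    _ ≤ RCLike.re (inner 𝕜 v (S v)) := hTS v hvK
    _ ≤ ν j * ‖v‖ ^ 2 := re_inner_map_self_le hc fun k hk =>
      hvU _ (Submodule.subset_span ⟨k, by simpa using hν.reflect_lt hk, rfl⟩)

end Rayleigh

section SortedEigs

variable {𝕜 : Type*} [RCLike 𝕜] {d : ℕ} {M N : Matrix (Fin d) (Fin d) 𝕜}

theorem sortedEigs_of_isHermitian (hM : M.IsHermitian) :
    sortedEigs M = hM.eigenvalues ∘ Tuple.sort hM.eigenvalues :=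
  dif_pos hM

theorem sortedEigs_monotone (M : Matrix (Fin d) (Fin d) 𝕜) : Monotone (sortedEigs M) := by
  unfold sortedEigs
  split_ifs
  exacts [Tuple.monotone_sort _, monotone_const]

theorem exists_orthonormalBasis_apply_eq_sortedEigs_smul (hM : M.IsHermitian) :
    ∃ b : OrthonormalBasis (Fin d) 𝕜 (EuclideanSpace 𝕜 (Fin d)),
      ∀ i, toEuclideanLin M (b i) = (sortedEigs M i : 𝕜) • b i := by
  refine ⟨hM.eigenvectorBasis.reindex (Tuple.sort hM.eigenvalues).symm, fun i => ?_⟩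
  ext j
  have h := congrFun (hM.mulVec_eigenvectorBasis (Tuple.sort hM.eigenvalues i)) j
  simpa [sortedEigs_of_isHermitian hM, toLpLin_apply, RCLike.real_smul_eq_coe_mul] using h

theorem range_sortedEigs (hM : M.IsHermitian) : Set.range (sortedEigs M) = spectrum ℝ M := by
  rw [sortedEigs_of_isHermitian hM, EquivLike.range_comp, hM.spectrum_real_eq_range_eigenvalues]

theorem hasEigenvalue_toLin'_iff_mem_range_sortedEigs (hM : M.IsHermitian) {c : ℝ} :
    HasEigenvalue (toLin' M) (c : 𝕜) ↔ c ∈ Set.range (sortedEigs M) := by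
  rw [range_sortedEigs hM, hasEigenvalue_iff_mem_spectrum, spectrum_toLin']
  exact spectrum.algebraMap_mem_iff 𝕜

theorem sortedEigs_le_of_re_inner_toEuclideanLin_le (hM : M.IsHermitian) (hN : N.IsHermitian)
    {K : Submodule 𝕜 (EuclideanSpace 𝕜 (Fin d))}
    (hMN : ∀ v ∈ Kᗮ, RCLike.re (inner 𝕜 v (toEuclideanLin M v)) ≤
      RCLike.re (inner 𝕜 v (toEuclideanLin N v)))
    {i j : Fin d} (hij : i + finrank 𝕜 K ≤ j) : sortedEigs M i ≤ sortedEigs N j := by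
  obtain ⟨b, hb⟩ := exists_orthonormalBasis_apply_eq_sortedEigs_smul hM
  obtain ⟨c, hc⟩ := exists_orthonormalBasis_apply_eq_sortedEigs_smul hN
  exact eigenvalue_le_of_re_inner_map_self_le (sortedEigs_monotone M) (sortedEigs_monotone N)
    hb hc hMN hij

open scoped ComplexOrder in
theorem sortedEigs_le_of_posSemidef_sub (hM : M.IsHermitian) (hN : N.IsHermitian)
    (hMN : (N - M).PosSemidef) (i : Fin d) : sortedEigs M i ≤ sortedEigs N i := by
  refine sortedEigs_le_of_re_inner_toEuclideanLin_le hM hN (K := ⊥) (fun v _ => ?_) (by simp)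
  have h := (isPositive_toEuclideanLin_iff.mpr hMN).re_inner_nonneg_right v
  simpa [inner_sub_right] using h

theorem sortedEigs_le_of_rank_sub (hM : M.IsHermitian) (hN : N.IsHermitian) {i j : Fin d}
    (hij : i + (M - N).rank ≤ j) : sortedEigs M i ≤ sortedEigs N j := by
  rw [rank_eq_finrank_range_toLin _ (PiLp.basisFun 2 𝕜 (Fin d)) (PiLp.basisFun 2 𝕜 (Fin d)),
    ← toLpLin_eq_toLin] at hij
  refine sortedEigs_le_of_re_inner_toEuclideanLin_le hM hN (fun v hv => ?_) hij
  have h : inner 𝕜 (toEuclideanLin (M - N) v) v = 0 := hv _ (LinearMap.mem_range_self _ v)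
  rw [inner_eq_zero_symm, map_sub, LinearMap.sub_apply, inner_sub_right, sub_eq_zero] at h
  rw [h]

end SortedEigs

section RankOnePerturbation

theorem finrank_eq_one_of_disjoint_ker {K V : Type*} [DivisionRing K] [AddCommGroup V]
    [Module K V] {S : Submodule K V} (hS : S ≠ ⊥) {φ : V →ₗ[K] K}
    (hφ : Disjoint S (LinearMap.ker φ)) : finrank K S = 1 := by
  have hinj : Function.Injective (φ.domRestrict S) := LinearMap.injective_domRestrict_iff.mpr hφ
  have := Submodule.nontrivial_iff_ne_bot.mpr hS
  have hne : φ.domRestrict S ≠ 0 := fun h => not_subsingleton S ⟨fun x y => hinj (by simp [h])⟩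
  rw [(LinearEquiv.ofBijective _ ⟨hinj, LinearMap.surjective hne⟩).finrank_eq, finrank_self]

theorem finrank_eigenspace_eq_one {K V : Type*} [Field K] [AddCommGroup V] [Module K V]
    {f : End K V} {c : K} (hc : HasEigenvalue f c) {φ : V →ₗ[K] K}
    (hφ : ∀ v, HasEigenvector f c v → φ v ≠ 0) : finrank K (eigenspace f c) = 1 :=
  finrank_eq_one_of_disjoint_ker hc <| Submodule.disjoint_def.mpr fun v hv hφv =>
    by_contra fun hv₀ => hφ v ⟨hv, hv₀⟩ hφv

theorem isHermitian_vecMulVec_star {R n : Type*} [Mul R] [StarMul R] (w : n → R) :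
    (vecMulVec w (star w)).IsHermitian := by
  rw [IsHermitian, conjTranspose_vecMulVec, star_star]

variable {R n : Type*} [CommRing R] [Fintype n]

theorem hasEigenvector_toLin'_iff [DecidableEq n] {A : Matrix n n R} {c : R} {v : n → R} :
    HasEigenvector (toLin' A) c v ↔ A *ᵥ v = c • v ∧ v ≠ 0 := by
  rw [hasEigenvector_iff, mem_eigenspace_iff, toLin'_apply]

theorem add_vecMulVec_mulVec (A : Matrix n n R) (w u v : n → R) :
    (A + vecMulVec w u) *ᵥ v = A *ᵥ v + (u ⬝ᵥ v) • w := by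
  simp [add_mulVec, vecMulVec_mulVec]

variable [StarRing R]

theorem vecMulVec_star_mulVec_eq_zero_iff [IsDomain R] {w v : n → R} :
    vecMulVec w (star w) *ᵥ v = 0 ↔ star w ⬝ᵥ v = 0 := by
  rw [vecMulVec_mulVec, op_smul_eq_smul, smul_eq_zero, or_iff_left_of_imp]
  rintro rfl
  simp

theorem star_dotProduct_mulVec_of_mulVec_eq_smul {A : Matrix n n R} (hA : A.IsHermitian) {c : R}
    (hc : IsSelfAdjoint c) {u : n → R} (hu : A *ᵥ u = c • u) (v : n → R) :
    star u ⬝ᵥ A *ᵥ v = c * (star u ⬝ᵥ v) := by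
  rw [dotProduct_mulVec, ← hA.eq, ← star_mulVec, hu, star_smul, hc.star_eq, smul_dotProduct,
    smul_eq_mul]

theorem hasEigenvalue_add_vecMulVec_star_iff [IsDomain R] [DecidableEq n] {A : Matrix n n R}
    (hA : A.IsHermitian) {c : R} (hc : IsSelfAdjoint c) (hAc : HasEigenvalue (toLin' A) c)
    (w : n → R) :
    HasEigenvalue (toLin' (A + vecMulVec w (star w))) c ↔
      ∃ v, HasEigenvector (toLin' A) c v ∧ star w ⬝ᵥ v = 0 := by
  constructor
  · intro hCc
    obtain ⟨u, hu⟩ := hAc.exists_hasEigenvector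
    obtain ⟨v, hv⟩ := hCc.exists_hasEigenvector
    obtain ⟨hvc, hv₀⟩ := hasEigenvector_toLin'_iff.mp hv
    rw [add_vecMulVec_mulVec] at hvc
    have hwvu : (star w ⬝ᵥ v) * (star u ⬝ᵥ w) = 0 := by
      have h := congrArg (star u ⬝ᵥ ·) hvc
      simpa [star_dotProduct_mulVec_of_mulVec_eq_smul hA hc (hasEigenvector_toLin'_iff.mp hu).1]
        using h
    rcases mul_eq_zero.mp hwvu with hwv | huw
    · exact ⟨v, hasEigenvector_toLin'_iff.mpr ⟨by simpa [hwv] using hvc, hv₀⟩, hwv⟩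
    · exact ⟨u, hu, by rw [star_dotProduct, huw, star_zero]⟩
  · rintro ⟨v, hv, hwv⟩
    obtain ⟨hvc, hv₀⟩ := hasEigenvector_toLin'_iff.mp hv
    exact hasEigenvalue_of_hasEigenvector <| hasEigenvector_toLin'_iff.mpr
      ⟨by rw [add_vecMulVec_mulVec, hwv, zero_smul, add_zero, hvc], hv₀⟩

theorem not_hasEigenvalue_add_vecMulVec_star_iff {K : Type*} [Field K] [StarRing K]
    [DecidableEq n] {A : Matrix n n K} (hA : A.IsHermitian) {c : K} (hc : IsSelfAdjoint c)
    (hAc : HasEigenvalue (toLin' A) c) (w : n → K) :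
    ¬ HasEigenvalue (toLin' (A + vecMulVec w (star w))) c ↔
      finrank K (eigenspace (toLin' A) c) = 1 ∧
        ∀ v, HasEigenvector (toLin' A) c v → star w ⬝ᵥ v ≠ 0 := by
  rw [hasEigenvalue_add_vecMulVec_star_iff hA hc hAc]
  push Not
  exact ⟨fun h => ⟨finrank_eigenspace_eq_one hAc (φ := dotProductBilin K K (star w)) h, h⟩,
    And.right⟩

end RankOnePerturbation

section Interlacing

variable {𝕜 : Type*} [RCLike 𝕜] {d : ℕ} {A : Matrix (Fin d) (Fin d) 𝕜}

theorem sortedEigs_le_sortedEigs_add_vecMulVec_star (hA : A.IsHermitian) (w : Fin d → 𝕜)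
    (n : Fin d) : sortedEigs A n ≤ sortedEigs (A + vecMulVec w (star w)) n := by
  open scoped ComplexOrder in
  have hw := posSemidef_vecMulVec_self_star w
  exact sortedEigs_le_of_posSemidef_sub hA (hA.add (isHermitian_vecMulVec_star w))
    (by rwa [add_sub_cancel_left]) n

theorem sortedEigs_add_vecMulVec_star_le (hA : A.IsHermitian) (w : Fin d → 𝕜) {m n : Fin d}
    (hmn : m < n) : sortedEigs (A + vecMulVec w (star w)) m ≤ sortedEigs A n := by
  refine sortedEigs_le_of_rank_sub (hA.add (isHermitian_vecMulVec_star w)) hA ?_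
  rw [add_sub_cancel_left]
  have := rank_vecMulVec_le w (star w)
  omega

theorem sortedEigs_add_vecMulVec_star_strict_iff (hA : A.IsHermitian) (w : Fin d → 𝕜) (n : Fin d) :
    (∀ m < n, sortedEigs (A + vecMulVec w (star w)) m < sortedEigs A n) ∧
        sortedEigs A n < sortedEigs (A + vecMulVec w (star w)) n ↔
      finrank 𝕜 (eigenspace (toLin' A) (sortedEigs A n : 𝕜)) = 1 ∧
        ∀ v, HasEigenvector (toLin' A) (sortedEigs A n : 𝕜) v → star w ⬝ᵥ v ≠ 0 := by
  have hAn := (hasEigenvalue_toLin'_iff_mem_range_sortedEigs hA).mpr (Set.mem_range_self n)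
  rw [← not_hasEigenvalue_add_vecMulVec_star_iff hA (RCLike.conj_ofReal _) hAn,
    hasEigenvalue_toLin'_iff_mem_range_sortedEigs (hA.add (isHermitian_vecMulVec_star w)),
    notMem_range_iff_forall_lt_and_lt (sortedEigs_monotone _)
      (fun _ => sortedEigs_add_vecMulVec_star_le hA w)
      (sortedEigs_le_sortedEigs_add_vecMulVec_star hA w n)]

theorem rank_one_interlacing_nsd_general (A B : Matrix (Fin d) (Fin d) 𝕜) (hA : A.IsHermitian)
    (w : Fin d → 𝕜) (hB : B = -vecMulVec w (star w)) :
    (∀ m n : Fin d, m < n → sortedEigs (A - B) m ≤ sortedEigs A n) ∧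
    (∀ n : Fin d, sortedEigs A n ≤ sortedEigs (A - B) n) ∧
    (∀ n : Fin d,
      ((∀ m < n, sortedEigs (A - B) m < sortedEigs A n) ∧
        sortedEigs A n < sortedEigs (A - B) n) ↔
      (finrank 𝕜 (eigenspace (toLin' A) (sortedEigs A n : 𝕜)) = 1 ∧
        ∀ v : Fin d → 𝕜, A *ᵥ v = (sortedEigs A n : 𝕜) • v → v ≠ 0 → B *ᵥ v ≠ 0)) := by
  subst hB
  simp only [sub_neg_eq_add, neg_mulVec, neg_ne_zero, ne_eq, vecMulVec_star_mulVec_eq_zero_iff]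
  refine ⟨fun m n => sortedEigs_add_vecMulVec_star_le hA w,
    sortedEigs_le_sortedEigs_add_vecMulVec_star hA w, fun n => ?_⟩
  simpa only [hasEigenvector_toLin'_iff, and_imp] using
    sortedEigs_add_vecMulVec_star_strict_iff hA w n

end Interlacing

/-- rank-one (negative semidefinite) Weyl interlacing, with the strictness
criterion.  Here `B = -w w*` is a rank-one negative semidefinite self-adjoint matrix.
(The index `n` is 0-based, so "λ_{n-1}(A-B) ≤ λ_n(A) for n ≥ 2" becomes the statement for
`n : Fin d` with `1 ≤ (n : ℕ)`.) -/
theorem rank_one_interlacing_nsd {d : ℕ} (A B : Matrix (Fin d) (Fin d) ℂ)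
    (hA : A.IsHermitian) (w : Fin d → ℂ) (hw : w ≠ 0)
    (hB : B = -Matrix.of fun i j => w i * star (w j)) :
    (∀ (n : Fin d) (hn : 1 ≤ (n : ℕ)),
      sortedEigs (A - B) ⟨(n : ℕ) - 1, by have := n.isLt; omega⟩ ≤ sortedEigs A n) ∧
    (∀ n : Fin d, sortedEigs A n ≤ sortedEigs (A - B) n) ∧
    (∀ (n : Fin d) (hn : 1 ≤ (n : ℕ)),
      (sortedEigs (A - B) ⟨(n : ℕ) - 1, by have := n.isLt; omega⟩ < sortedEigs A n ∧
        sortedEigs A n < sortedEigs (A - B) n) ↔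
      (Module.finrank ℂ
          (Module.End.eigenspace (Matrix.toLin' A) ((sortedEigs A n : ℝ) : ℂ)) = 1 ∧
        ∀ v : Fin d → ℂ, A.mulVec v = ((sortedEigs A n : ℝ) : ℂ) • v → v ≠ 0 →
          B.mulVec v ≠ 0)) := by
  obtain ⟨h₁, h₂, h₃⟩ := rank_one_interlacing_nsd_general A B hA w hB
  exact ⟨fun n hn => h₁ _ n (Fin.lt_def.mpr (Nat.sub_one_lt_of_lt hn)), h₂, fun n hn => by
    rw [← forall_lt_lt_iff_of_covBy (sortedEigs_monotone _)
      (Fin.covBy_iff.mpr (Nat.covBy_iff_add_one_eq.mpr (Nat.sub_add_cancel hn)))]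
    exact h₃ n⟩
end

section
/- Let H be a d×d real symmetric matrix and let u_1 ≠ u_2 be two indices with H_{u_1 u_2} = H_{u_2 u_1} = −1. For α ∈ ℝ let H(Γ_mag^α) be the matrix obtained from H by replacing the entries at (u_1,u_2) and (u_2,u_1) by −e^{iα} and −e^{−iα} respectively, and let Ĥ = H(Γ_mag^π) be the matrix in which these two entries are replaced by +1. Then for every n, the minimum over α ∈ ℝ of λ_n(H(Γ_mag^α)) and the maximum over α ∈ ℝ of λ_n(H(Γ_mag^α)) are, in some order, equal to λ_n(H) and λ_n(Ĥ); that is, either min_α λ_n(H(Γ_mag^α)) = λ_n(H) and max_α λ_n(H(Γ_mag^α)) = λ_n(Ĥ), or min_α λ_n(H(Γ_mag^α)) = λ_n(Ĥ) and max_α λ_n(H(Γ_mag^α)) = λ_n(H). -/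
open Matrix

/-- The "magnetic" modification `H(Γ_mag^α)` of `H` at the edge `(u1, u2)`. -/
noncomputable def magMat {d : ℕ} (H : Matrix (Fin d) (Fin d) ℂ) (u1 u2 : Fin d) (α : ℝ) :
    Matrix (Fin d) (Fin d) ℂ :=
  Matrix.of fun a b =>
    if a = u1 ∧ b = u2 then -Complex.exp (Complex.I * (α : ℝ))
    else if a = u2 ∧ b = u1 then -Complex.exp (-(Complex.I * (α : ℝ)))
    else H a b

/-!
By multilinearity of the determinant, the characteristic polynomial of `H(Γ_mag^α)` is
`P + z Q₁ + w Q₂ + z w R` with `z = -e^{iα}` and `w = -e^{-iα}`. Transposition swaps `z` and `w`,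
so `Q₁ = Q₂` when `H` is symmetric, and the characteristic polynomial has the form `P + cos α · Q`.
Hence `λ_n(H(Γ_mag^α))` depends only on `cos α`, and a value which it takes at two different points
of `[0, π]` is a common root of `P` and `Q`. There are finitely many such values, so `λ_n`, being
continuous by Weyl's inequality, is monotone on `[0, π]`: its extrema lie at `0` and `π`.
-/

open Polynomial Set
open scoped InnerProductSpace Matrix.Norms.L2Operator

section Monotonicity

variable {X Y : Type*} [ConditionallyCompleteLinearOrder X] [TopologicalSpace X] [OrderTopology X]
  [DenselyOrdered X] [LinearOrder Y] [TopologicalSpace Y] [OrderTopology Y] [DenselyOrdered Y]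
  {s : Set X} {D : Set Y}

lemma le_max_of_injOn_inter_preimage_dense {f : X → Y} (hs : s.OrdConnected)
    (hf : ContinuousOn f s) (hD : Dense D) (hinj : InjOn f (s ∩ f ⁻¹' D)) {a b c : X} (ha : a ∈ s)
    (hc : c ∈ s) (hab : a ≤ b) (hbc : b ≤ c) : f b ≤ max (f a) (f c) := by
  have hb : b ∈ s := hs.out ha hc ⟨hab, hbc⟩
  by_contra! hlt
  obtain ⟨v, hvD, hv, hvb⟩ := hD.exists_between hlt
  obtain ⟨x, hx, rfl⟩ := intermediate_value_Icc hab (hf.mono (hs.out ha hb))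
    ⟨(le_max_left _ _).trans hv.le, hvb.le⟩
  obtain ⟨y, hy, hyx⟩ := intermediate_value_Icc' hbc (hf.mono (hs.out hb hc))
    ⟨(le_max_right _ _).trans hv.le, hvb.le⟩
  have hxy : y = x :=
    hinj ⟨hs.out hb hc hy, by rwa [mem_preimage, hyx]⟩ ⟨hs.out ha hb hx, hvD⟩ hyx
  have hxb : x = b := le_antisymm hx.2 (hxy ▸ hy.1)
  exact hvb.ne (congrArg f hxb)

lemma monotoneOn_or_antitoneOn_of_injOn_inter_preimage_dense {f : X → Y} (hs : s.OrdConnected)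
    (hf : ContinuousOn f s) (hD : Dense D) (hinj : InjOn f (s ∩ f ⁻¹' D)) :
    MonotoneOn f s ∨ AntitoneOn f s := by
  by_contra! h
  obtain ⟨a, ha, b, -, c, hc, hab, hbc, ⟨hlt, hgt⟩ | ⟨hgt, hlt⟩⟩ :=
    not_monotoneOn_not_antitoneOn_iff_exists_le_le.1 h
  · exact (max_lt hlt hgt).not_ge
      (le_max_of_injOn_inter_preimage_dense hs hf hD hinj ha hc hab hbc)
  · exact (lt_min hgt hlt).not_ge
      (le_max_of_injOn_inter_preimage_dense (Y := Yᵒᵈ) hs hf hD hinj ha hc hab hbc)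

end Monotonicity

section MinMax

variable {𝕜 E ι : Type*} [RCLike 𝕜] [NormedAddCommGroup E] [InnerProductSpace 𝕜 E] [Fintype ι]
  {T S : E →ₗ[𝕜] E} {b c : OrthonormalBasis ι 𝕜 E} {e f : ι → ℝ}

lemma re_inner_map_self_eq_sum_s5 (hT : ∀ i, T (b i) = (e i : 𝕜) • b i) (x : E) :
    RCLike.re ⟪x, T x⟫_𝕜 = ∑ i, e i * ‖⟪b i, x⟫_𝕜‖ ^ 2 := by
  have hTx : T x = ∑ i, (e i * ⟪b i, x⟫_𝕜) • b i := by
    conv_lhs => rw [← b.sum_repr' x]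
    simp only [map_sum, map_smul, hT, smul_smul, mul_comm]
  rw [hTx, inner_sum, map_sum]
  refine Finset.sum_congr rfl fun i _ => ?_
  rw [inner_smul_right, mul_assoc, RCLike.re_ofReal_mul, inner_mul_symm_re_eq_norm, norm_mul,
    norm_inner_symm x, sq]

variable [LinearOrder ι] {n : ι} {x : E}

lemma mul_norm_sq_le_re_inner_map_self (hT : ∀ i, T (b i) = (e i : 𝕜) • b i) (he : Monotone e)
    (hx : ∀ i < n, ⟪b i, x⟫_𝕜 = 0) : e n * ‖x‖ ^ 2 ≤ RCLike.re ⟪x, T x⟫_𝕜 := by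
  rw [re_inner_map_self_eq_sum_s5 hT, ← b.sum_sq_norm_inner_right x, Finset.mul_sum]
  refine Finset.sum_le_sum fun i _ => ?_
  rcases lt_or_ge i n with hi | hi
  · simp [hx i hi]
  · exact mul_le_mul_of_nonneg_right (he hi) (by positivity)

lemma re_inner_map_self_le_mul_norm_sq (hT : ∀ i, T (b i) = (e i : 𝕜) • b i) (he : Monotone e)
    (hx : ∀ i > n, ⟪b i, x⟫_𝕜 = 0) : RCLike.re ⟪x, T x⟫_𝕜 ≤ e n * ‖x‖ ^ 2 := by
  rw [re_inner_map_self_eq_sum_s5 hT, ← b.sum_sq_norm_inner_right x, Finset.mul_sum]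
  refine Finset.sum_le_sum fun i _ => ?_
  rcases lt_or_ge n i with hi | hi
  · simp [hx i hi]
  · exact mul_le_mul_of_nonneg_right (he hi) (by positivity)

lemma exists_ne_zero_inner_eq_zero_of_lt_of_gt (b c : OrthonormalBasis ι 𝕜 E) (n : ι) :
    ∃ x : E, x ≠ 0 ∧ (∀ i < n, ⟪b i, x⟫_𝕜 = 0) ∧ ∀ i > n, ⟪c i, x⟫_𝕜 = 0 := by
  have : FiniteDimensional 𝕜 E := b.toBasis.finiteDimensional_of_finite
  let L : E →ₗ[𝕜] {i // i ≠ n} → 𝕜 :=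
    LinearMap.pi fun i => (innerₛₗ 𝕜 (if i.1 < n then b i else c i) : E →ₗ[𝕜] 𝕜)
  have hker : LinearMap.ker L ≠ ⊥ := by
    apply LinearMap.ker_ne_bot_of_finrank_lt
    rw [Module.finrank_fintype_fun_eq_card, Module.finrank_eq_card_basis b.toBasis]
    exact Fintype.card_subtype_lt (x := n) (by simp)
  obtain ⟨x, hx, hx0⟩ := Submodule.exists_mem_ne_zero_of_ne_bot hker
  have hLx (i : {i // i ≠ n}) : ⟪if i.1 < n then b i else c i, x⟫_𝕜 = 0 :=
    congrFun (LinearMap.mem_ker.1 hx) i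
  refine ⟨x, hx0, fun i hi => ?_, fun i hi => ?_⟩
  · simpa [hi] using hLx ⟨i, hi.ne⟩
  · simpa [hi.not_gt] using hLx ⟨i, hi.ne'⟩

lemma eigenvalue_le_add_of_re_inner_le {C : ℝ} (hT : ∀ i, T (b i) = (e i : 𝕜) • b i)
    (hS : ∀ i, S (c i) = (f i : 𝕜) • c i) (he : Monotone e) (hf : Monotone f)
    (hTS : ∀ x, RCLike.re ⟪x, T x⟫_𝕜 ≤ RCLike.re ⟪x, S x⟫_𝕜 + C * ‖x‖ ^ 2) (n : ι) :
    e n ≤ f n + C := by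
  obtain ⟨x, hx0, hbx, hcx⟩ := exists_ne_zero_inner_eq_zero_of_lt_of_gt b c n
  have hx : 0 < ‖x‖ ^ 2 := by positivity
  refine le_of_mul_le_mul_right ?_ hx
  calc e n * ‖x‖ ^ 2 ≤ RCLike.re ⟪x, T x⟫_𝕜 := mul_norm_sq_le_re_inner_map_self hT he hbx
    _ ≤ RCLike.re ⟪x, S x⟫_𝕜 + C * ‖x‖ ^ 2 := hTS x
    _ ≤ f n * ‖x‖ ^ 2 + C * ‖x‖ ^ 2 := by
      gcongr; exact re_inner_map_self_le_mul_norm_sq hS hf hcx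
    _ = (f n + C) * ‖x‖ ^ 2 := (add_mul _ _ _).symm

end MinMax

section SortedEigs

variable {𝕜 : Type*} [RCLike 𝕜] {d : ℕ} {A B : Matrix (Fin d) (Fin d) 𝕜}

lemma sortedEigs_eq_comp_sort (hA : A.IsHermitian) :
    sortedEigs A = hA.eigenvalues ∘ Tuple.sort hA.eigenvalues :=
  dif_pos hA

lemma monotone_sortedEigs (hA : A.IsHermitian) : Monotone (sortedEigs A) := by
  rw [sortedEigs_eq_comp_sort hA]
  exact Tuple.monotone_sort hA.eigenvalues

lemma sortedEigs_eq_of_charpoly_eq (hA : A.IsHermitian) (hB : B.IsHermitian)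
    (h : A.charpoly = B.charpoly) : sortedEigs A = sortedEigs B := by
  rw [sortedEigs_eq_comp_sort hA, sortedEigs_eq_comp_sort hB,
    (hA.eigenvalues_eq_eigenvalues_iff hB).2 h]

lemma isRoot_charpoly_sortedEigs (hA : A.IsHermitian) (n : Fin d) :
    A.charpoly.IsRoot (sortedEigs A n : 𝕜) := by
  rw [hA.charpoly_eq, isRoot_prod, sortedEigs_eq_comp_sort hA]
  exact ⟨Tuple.sort hA.eigenvalues n, Finset.mem_univ _, root_X_sub_C.2 rfl⟩

lemma exists_orthonormalBasis_toEuclideanCLM_apply_eq_sortedEigs_smul (hA : A.IsHermitian) :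
    ∃ b : OrthonormalBasis (Fin d) 𝕜 (EuclideanSpace 𝕜 (Fin d)),
      ∀ i, toEuclideanCLM (𝕜 := 𝕜) A (b i) = (sortedEigs A i : 𝕜) • b i := by
  refine ⟨hA.eigenvectorBasis.reindex (Tuple.sort hA.eigenvalues).symm, fun i => ?_⟩
  ext j
  simpa [sortedEigs_eq_comp_sort hA, RCLike.real_smul_eq_coe_mul] using
    congrFun (hA.mulVec_eigenvectorBasis (Tuple.sort hA.eigenvalues i)) j

lemma sortedEigs_le_add_norm_sub (hA : A.IsHermitian) (hB : B.IsHermitian) (n : Fin d) :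
    sortedEigs A n ≤ sortedEigs B n + ‖A - B‖ := by
  obtain ⟨b, hb⟩ := exists_orthonormalBasis_toEuclideanCLM_apply_eq_sortedEigs_smul hA
  obtain ⟨c, hc⟩ := exists_orthonormalBasis_toEuclideanCLM_apply_eq_sortedEigs_smul hB
  let Φ := toEuclideanCLM (n := Fin d) (𝕜 := 𝕜)
  refine eigenvalue_le_add_of_re_inner_le (T := (Φ A).toLinearMap) (S := (Φ B).toLinearMap)
    (b := b) (c := c) hb hc (monotone_sortedEigs hA) (monotone_sortedEigs hB) (fun x => ?_) n
  rw [← sub_le_iff_le_add', ← map_sub, ← inner_sub_right]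
  calc RCLike.re ⟪x, Φ A x - Φ B x⟫_𝕜 = RCLike.re ⟪x, Φ (A - B) x⟫_𝕜 := by
        rw [map_sub, _root_.sub_apply]
    _ ≤ ‖x‖ * ‖Φ (A - B) x‖ := re_inner_le_norm _ _
    _ ≤ ‖x‖ * (‖A - B‖ * ‖x‖) := by gcongr; exact (Φ (A - B)).le_opNorm x
    _ = ‖A - B‖ * ‖x‖ ^ 2 := by ring

lemma lipschitzOnWith_sortedEigs (n : Fin d) :
    LipschitzOnWith 1 (fun A : Matrix (Fin d) (Fin d) 𝕜 => sortedEigs A n)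
      {A | A.IsHermitian} :=
  .of_le_add_mul 1 fun A hA B hB => by
    simpa [dist_eq_norm] using sortedEigs_le_add_norm_sub hA hB n

lemma sortedEigs_monotoneOn_or_antitoneOn_of_charpoly_eq {X : Type*}
    [ConditionallyCompleteLinearOrder X] [TopologicalSpace X] [OrderTopology X] [DenselyOrdered X]
    {s : Set X} (hs : s.OrdConnected) {M : X → Matrix (Fin d) (Fin d) 𝕜} (hM : ContinuousOn M s)
    (hherm : ∀ t ∈ s, (M t).IsHermitian) {P Q : 𝕜[X]} {c : X → 𝕜} (hc : InjOn c s)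
    (hchar : ∀ t ∈ s, (M t).charpoly = P + C (c t) * Q) (n : Fin d) :
    MonotoneOn (fun t => sortedEigs (M t) n) s ∨ AntitoneOn (fun t => sortedEigs (M t) n) s := by
  obtain rfl | ⟨t₀, ht₀⟩ := s.eq_empty_or_nonempty
  · exact .inl (subsingleton_empty.monotoneOn _)
  have hfin : {v : ℝ | (M t₀).charpoly.IsRoot (v : 𝕜)}.Finite :=
    (finite_setOfPred_isRoot (charpoly_monic _).ne_zero).preimage RCLike.ofReal_injective.injOn
  refine monotoneOn_or_antitoneOn_of_injOn_inter_preimage_dense hs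
    ((lipschitzOnWith_sortedEigs n).continuousOn.comp hM hherm) (hfin.countable.dense_compl ℝ) ?_
  rintro x ⟨hx, hxD⟩ y ⟨hy, -⟩ (hxy : sortedEigs (M x) n = sortedEigs (M y) n)
  by_contra hne
  set v : 𝕜 := (sortedEigs (M x) n : 𝕜)
  have hPQx : P.eval v + c x * Q.eval v = 0 := by
    simpa [hchar x hx] using (isRoot_charpoly_sortedEigs (hherm x hx) n).eq_zero
  have hPQy : P.eval v + c y * Q.eval v = 0 := by
    simpa [hchar y hy, ← hxy] using (isRoot_charpoly_sortedEigs (hherm y hy) n).eq_zero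
  have hQ : Q.eval v = 0 := by
    have : (c x - c y) * Q.eval v = 0 := by linear_combination hPQx - hPQy
    exact (mul_eq_zero.1 this).resolve_left (sub_ne_zero.2 (hc.ne hx hy hne))
  have hP : P.eval v = 0 := by simpa [hQ] using hPQx
  exact hxD (show (M t₀).charpoly.eval v = 0 by simp [hchar t₀ ht₀, hP, hQ])

end SortedEigs

section UpdateEdge

variable {n R : Type*} [DecidableEq n]

/-- The matrix `A` with the entries at `(u, v)` and `(v, u)`, the weights of the two orientations
of the edge `uv`, replaced by `z` and `w`. For `u = v` the diagonal entry becomes `z`. -/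
def updateEdge (A : Matrix n n R) (u v : n) (z w : R) : Matrix n n R :=
  of fun a b => if a = u ∧ b = v then z else if a = v ∧ b = u then w else A a b

variable {A : Matrix n n R} {u v : n}

lemma transpose_updateEdge (A : Matrix n n R) (huv : u ≠ v) (z w : R) :
    (updateEdge A u v z w)ᵀ = updateEdge Aᵀ u v w z := by
  ext a b
  simp only [updateEdge, transpose_apply, of_apply]
  grind

lemma isHermitian_updateEdge [InvolutiveStar R] (hA : A.IsHermitian) (huv : u ≠ v) {z w : R}
    (hzw : star z = w) : (updateEdge A u v z w).IsHermitian := by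
  ext a b
  have hwz : star w = z := by rw [← hzw, star_star]
  have hab := hA.apply a b
  simp only [updateEdge, conjTranspose_apply, of_apply]
  grind

lemma updateEdge_eq_updateRow (A : Matrix n n R) (u v : n) (z z' w : R) :
    updateEdge A u v z w = (updateEdge A u v z' w).updateRow u (updateEdge A u v z w u) := by
  ext a b
  by_cases ha : a = u
  · simp [ha]
  · simp [updateEdge, ha]

variable [Fintype n] [CommRing R]

lemma det_updateEdge_left (A : Matrix n n R) (u v : n) (z w : R) :
    (updateEdge A u v z w).det =
      (1 - z) * (updateEdge A u v 0 w).det + z * (updateEdge A u v 1 w).det := by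
  have hrow : updateEdge A u v z w u =
      (1 - z) • updateEdge A u v 0 w u + z • updateEdge A u v 1 w u := by
    ext b
    simp only [updateEdge, of_apply, Pi.add_apply, Pi.smul_apply, smul_eq_mul]
    split_ifs <;> ring
  rw [updateEdge_eq_updateRow A u v z 0, hrow, det_updateRow_add, det_updateRow_smul,
    det_updateRow_smul, ← updateEdge_eq_updateRow, ← updateEdge_eq_updateRow]

lemma det_updateEdge_comm (hA : A.IsSymm) (huv : u ≠ v) (z w : R) :
    (updateEdge A u v z w).det = (updateEdge A u v w z).det := by
  rw [← det_transpose, transpose_updateEdge A huv, hA]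

lemma det_updateEdge_of_isSymm (hA : A.IsSymm) (huv : u ≠ v) (z w : R) :
    (updateEdge A u v z w).det =
      (1 - z - w + z * w) * (updateEdge A u v 0 0).det +
        (z + w - 2 * (z * w)) * (updateEdge A u v 1 0).det +
        z * w * (updateEdge A u v 1 1).det := by
  rw [det_updateEdge_left, det_updateEdge_comm hA huv 0 w, det_updateEdge_comm hA huv 1 w,
    det_updateEdge_left A u v w 0, det_updateEdge_left A u v w 1, det_updateEdge_comm hA huv 0 1]
  ring

lemma charmatrix_updateEdge (A : Matrix n n R) (huv : u ≠ v) (z w : R) :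
    (updateEdge A u v z w).charmatrix = updateEdge A.charmatrix u v (-C z) (-C w) := by
  ext1 a b
  simp only [updateEdge, charmatrix_apply, diagonal_apply, of_apply]
  grind

lemma exists_charpoly_updateEdge_eq (hA : A.IsSymm) (huv : u ≠ v) :
    ∃ P Q S : R[X], ∀ z w : R,
      (updateEdge A u v z w).charpoly = P + C (z + w) * Q + C (z * w) * S := by
  have hsymm : A.charmatrix.IsSymm := by rw [IsSymm, ← charmatrix_transpose, hA]
  let D (z w : R[X]) := (updateEdge A.charmatrix u v z w).det
  refine ⟨D 0 0, D 0 0 - D 1 0, D 0 0 - 2 * D 1 0 + D 1 1, fun z w => ?_⟩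
  rw [charpoly, charmatrix_updateEdge A huv, det_updateEdge_of_isSymm hsymm huv, C_add, C_mul]
  ring

end UpdateEdge

section MagMat

variable {d : ℕ} {H : Matrix (Fin d) (Fin d) ℂ} {u v : Fin d}

lemma magMat_eq_updateEdge (H : Matrix (Fin d) (Fin d) ℂ) (u v : Fin d) (α : ℝ) :
    magMat H u v α =
      updateEdge H u v (-Complex.exp (Complex.I * α)) (-Complex.exp (-(Complex.I * α))) :=
  rfl

lemma continuous_magMat (H : Matrix (Fin d) (Fin d) ℂ) (u v : Fin d) :
    Continuous (magMat H u v) := by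
  refine continuous_matrix fun a b => ?_
  simp only [magMat, of_apply]
  split_ifs <;> fun_prop

lemma isHermitian_magMat (hH : H.IsHermitian) (huv : u ≠ v) (α : ℝ) :
    (magMat H u v α).IsHermitian :=
  isHermitian_updateEdge hH huv (by simp [← Complex.exp_conj])

lemma exists_charpoly_magMat_eq (hH : H.IsSymm) (huv : u ≠ v) :
    ∃ P Q : ℂ[X], ∀ α : ℝ, (magMat H u v α).charpoly = P + C (Real.cos α : ℂ) * Q := by
  obtain ⟨P, Q, S, h⟩ := exists_charpoly_updateEdge_eq hH huv
  refine ⟨P + S, -2 * Q, fun α => ?_⟩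
  have hsum : -Complex.exp (Complex.I * α) + -Complex.exp (-(Complex.I * α)) =
      -2 * Real.cos α := by
    rw [mul_comm, Complex.ofReal_cos, neg_mul, Complex.two_cos]
    ring_nf
  have hprod : -Complex.exp (Complex.I * α) * -Complex.exp (-(Complex.I * α)) = 1 := by
    rw [neg_mul_neg, ← Complex.exp_add, add_neg_cancel, Complex.exp_zero]
  rw [magMat_eq_updateEdge, h, hsum, hprod]
  simp only [C_mul, C_neg, C_1, C_ofNat]
  ring

lemma sortedEigs_magMat_monotoneOn_or_antitoneOn (hsymm : H.IsSymm) (hherm : H.IsHermitian)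
    (huv : u ≠ v) (n : Fin d) :
    MonotoneOn (fun α => sortedEigs (magMat H u v α) n) (Icc 0 Real.pi) ∨
      AntitoneOn (fun α => sortedEigs (magMat H u v α) n) (Icc 0 Real.pi) := by
  obtain ⟨P, Q, h⟩ := exists_charpoly_magMat_eq hsymm huv
  exact sortedEigs_monotoneOn_or_antitoneOn_of_charpoly_eq ordConnected_Icc
    (continuous_magMat H u v).continuousOn (fun α _ => isHermitian_magMat hherm huv α)
    (Complex.ofReal_injective.comp_injOn Real.injOn_cos) (fun α _ => h α) n

lemma sortedEigs_magMat_congr_cos (hsymm : H.IsSymm) (hherm : H.IsHermitian) (huv : u ≠ v)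
    {α β : ℝ} (hαβ : Real.cos α = Real.cos β) :
    sortedEigs (magMat H u v α) = sortedEigs (magMat H u v β) := by
  obtain ⟨P, Q, h⟩ := exists_charpoly_magMat_eq hsymm huv
  exact sortedEigs_eq_of_charpoly_eq (isHermitian_magMat hherm huv α)
    (isHermitian_magMat hherm huv β) (by rw [h, h, hαβ])

lemma setOf_sortedEigs_magMat_eq_image_Icc (hsymm : H.IsSymm) (hherm : H.IsHermitian)
    (huv : u ≠ v) (n : Fin d) :
    {x : ℝ | ∃ α : ℝ, x = sortedEigs (magMat H u v α) n} =
      (fun α => sortedEigs (magMat H u v α) n) '' Icc 0 Real.pi := by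
  refine Subset.antisymm ?_ (by rintro _ ⟨α, -, rfl⟩; exact ⟨α, rfl⟩)
  rintro _ ⟨α, rfl⟩
  have hcos : Real.cos (Real.arccos (Real.cos α)) = Real.cos α :=
    Real.cos_arccos (Real.neg_one_le_cos α) (Real.cos_le_one α)
  exact ⟨Real.arccos (Real.cos α), ⟨Real.arccos_nonneg _, Real.arccos_le_pi _⟩,
    congrFun (sortedEigs_magMat_congr_cos hsymm hherm huv hcos) n⟩

end MagMat

/-- for a real symmetric `H`, the minimum and the maximum over `α` of
`λ_n(H(Γ_mag^α))` are attained and are, in some order, the eigenvalues `λ_n(H(Γ_mag^0)) = λ_n(H)`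
and `λ_n(Ĥ) = λ_n(H(Γ_mag^π))`.  (`n : Fin d` indexes the sorted eigenvalues, 0-based.) -/
theorem mag_extrema_real_symmetric {d : ℕ} (H : Matrix (Fin d) (Fin d) ℝ) (hH : H.IsSymm)
    (u1 u2 : Fin d) (hne : u1 ≠ u2) (h12 : H u1 u2 = -1) (h21 : H u2 u1 = -1)
    (Hc : Matrix (Fin d) (Fin d) ℂ) (hHc : Hc = H.map (fun x => (x : ℂ))) (n : Fin d) :
    ∃ mn mx : ℝ,
      IsLeast {x : ℝ | ∃ α : ℝ, x = sortedEigs (magMat Hc u1 u2 α) n} mn ∧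
      IsGreatest {x : ℝ | ∃ α : ℝ, x = sortedEigs (magMat Hc u1 u2 α) n} mx ∧
      ((mn = sortedEigs (magMat Hc u1 u2 0) n ∧
          mx = sortedEigs (magMat Hc u1 u2 Real.pi) n) ∨
        (mn = sortedEigs (magMat Hc u1 u2 Real.pi) n ∧
          mx = sortedEigs (magMat Hc u1 u2 0) n)) := by
  have hsymm : Hc.IsSymm := by rw [hHc, IsSymm, ← transpose_map, hH]
  have hherm : Hc.IsHermitian := by ext a b; simp [hHc, hH.apply a b]
  rw [setOf_sortedEigs_magMat_eq_image_Icc hsymm hherm hne]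
  have hmin : IsLeast (Icc 0 Real.pi) 0 := isLeast_Icc Real.pi_pos.le
  have hmax : IsGreatest (Icc 0 Real.pi) Real.pi := isGreatest_Icc Real.pi_pos.le
  rcases sortedEigs_magMat_monotoneOn_or_antitoneOn hsymm hherm hne n with hmono | hanti
  · exact ⟨_, _, hmono.map_isLeast hmin, hmono.map_isGreatest hmax, .inl ⟨rfl, rfl⟩⟩
  · exact ⟨_, _, hanti.map_isGreatest hmax, hanti.map_isLeast hmin, .inr ⟨rfl, rfl⟩⟩
end

section
/- Let H be a d×d Hermitian matrix and let u_1 ≠ u_2 be two indices with H_{u_1 u_2} = H_{u_2 u_1} = −1. Suppose H f = λ f for some vector f with f_{u_1} ≠ 0 and γ := f_{u_2}/f_{u_1} a nonzero real number. Let H(Γ_γ^cut) be the matrix obtained from H by setting the (u_1,u_2) and (u_2,u_1) entries to 0 and replacing the diagonal entries H_{u_1 u_1}, H_{u_2 u_2} by H_{u_1 u_1} − γ and H_{u_2 u_2} − 1/γ. Then H(Γ_γ^cut) f = λ f, i.e. f is also an eigenvector of H(Γ_γ^cut) with the same eigenvalue λ. -/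
open Matrix

/-- The "cut" modification `H(Γ_γ^cut)` of `H` at the edge `(u1, u2)`. -/
noncomputable def cutMat {d : ℕ} (H : Matrix (Fin d) (Fin d) ℂ) (u1 u2 : Fin d) (γ : ℝ) :
    Matrix (Fin d) (Fin d) ℂ :=
  Matrix.of fun a b =>
    if a = u1 ∧ b = u2 then 0
    else if a = u2 ∧ b = u1 then 0
    else if a = u1 ∧ b = u1 then H u1 u1 - (γ : ℂ)
    else if a = u2 ∧ b = u2 then H u2 u2 - (γ : ℂ)⁻¹
    else H a b

/-!
Cutting the edge adds the block `!![-γ, 1; 1, -γ⁻¹]` at the coordinates `u1, u2`. This block has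
rank one: with `w = γ e_{u1} - e_{u2}` it is `-γ⁻¹ w wᵀ`. The condition `f u2 = γ f u1` says
exactly that `wᵀ f = 0`, so the perturbation annihilates `f`.
-/

theorem sub_vecMulVec_mulVec_of_dotProduct_eq_zero {m n R : Type*} [Fintype n]
    [NonUnitalRing R] (A : Matrix m n R) (v : m → R) {w f : n → R} (hwf : w ⬝ᵥ f = 0) :
    (A - vecMulVec v w) *ᵥ f = A *ᵥ f := by
  rw [sub_mulVec, vecMulVec_mulVec, hwf, MulOpposite.op_zero, zero_smul, sub_zero]

theorem vecMulVec_single_single {m n R : Type*} [DecidableEq m] [DecidableEq n]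
    [MulZeroClass R] (i : m) (j : n) (x y : R) :
    vecMulVec (Pi.single i x) (Pi.single j y) = single i j (x * y) := by
  ext a b
  simp only [vecMulVec_apply, Pi.single_apply, single_apply, ite_mul, mul_ite, zero_mul, mul_zero]
  grind

section CutVec

variable {n R : Type*} [DecidableEq n] [Ring R]

/-- The vector `γ e_u - e_v`, used to write the cut at the edge `(u, v)` as a rank-one
perturbation. It is normalized to have entry `-1` at `v`, so that its orthogonal complement for
the bilinear dot product is the set of `f` with `f v = γ f u`. -/
def cutVec (u v : n) (γ : R) : n → R :=
  Pi.single u γ - Pi.single v 1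

theorem cutVec_dotProduct [Fintype n] (u v : n) (γ : R) (f : n → R) :
    cutVec u v γ ⬝ᵥ f = γ * f u - f v := by
  rw [cutVec, sub_dotProduct, single_dotProduct, single_one_dotProduct]

end CutVec

section EdgeCut

variable {n K : Type*} [DecidableEq n] [DivisionRing K]

/-- The cut of a matrix at the edge `(u, v)` with parameter `γ`, as an additive perturbation.
Increasing the off-diagonal entries by `1`, rather than setting them to `0`, makes sense for all
edge weights and agrees with deletion for weight `-1`. Only `γ ≠ 0` is meaningful. -/
def edgeCut (H : Matrix n n K) (u v : n) (γ : K) : Matrix n n K :=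
  H - (single u u γ - single u v 1 - single v u 1 + single v v γ⁻¹)

theorem vecMulVec_cutVec (u v : n) {γ : K} (hγ : γ ≠ 0) :
    vecMulVec (γ⁻¹ • cutVec u v γ) (cutVec u v γ) =
      single u u γ - single u v 1 - single v u 1 + single v v γ⁻¹ := by
  have scaled : γ⁻¹ • cutVec u v γ = Pi.single u 1 - Pi.single v γ⁻¹ := by
    simp only [cutVec, smul_sub, ← Pi.single_smul, smul_eq_mul, inv_mul_cancel₀ hγ, mul_one]
  rw [scaled, cutVec]
  simp only [sub_vecMulVec, vecMulVec_sub, vecMulVec_single_single, one_mul, mul_one,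
    inv_mul_cancel₀ hγ]
  abel

theorem edgeCut_mulVec [Fintype n] (H : Matrix n n K) {u v : n} {γ : K}
    (hγ : γ ≠ 0) {f : n → K} (hf : f v = γ * f u) : edgeCut H u v γ *ᵥ f = H *ᵥ f := by
  have orthogonal : cutVec u v γ ⬝ᵥ f = 0 := by rw [cutVec_dotProduct, hf, sub_self]
  rw [edgeCut, ← vecMulVec_cutVec u v hγ, sub_vecMulVec_mulVec_of_dotProduct_eq_zero H _ orthogonal]

theorem cut_preserves_eigenvector_general [Fintype n] {H : Matrix n n K} {u v : n}
    {γ : K} (hγ : γ ≠ 0) {f : n → K} (hf : f v = γ * f u) {lam : K} (heig : H *ᵥ f = lam • f) :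
    edgeCut H u v γ *ᵥ f = lam • f :=
  (edgeCut_mulVec H hγ hf).trans heig

end EdgeCut

theorem cutMat_eq_edgeCut {d : ℕ} {H : Matrix (Fin d) (Fin d) ℂ} {u1 u2 : Fin d} (hne : u1 ≠ u2)
    (h12 : H u1 u2 = -1) (h21 : H u2 u1 = -1) (γ : ℝ) :
    cutMat H u1 u2 γ = edgeCut H u1 u2 (γ : ℂ) := by
  ext a b
  simp only [cutMat, edgeCut, of_apply, Matrix.sub_apply, Matrix.add_apply, single_apply]
  split_ifs <;> grind

/-- if `H f = λ f` and `γ = f_{u2}/f_{u1}` is a nonzero real number, then `f` is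
also an eigenvector, with the same eigenvalue, of the cut operator `H(Γ_γ^cut)`. -/
theorem cut_preserves_eigenvector {d : ℕ} (H : Matrix (Fin d) (Fin d) ℂ)
    (hH : H.IsHermitian) (u1 u2 : Fin d) (hne : u1 ≠ u2)
    (h12 : H u1 u2 = -1) (h21 : H u2 u1 = -1)
    (f : Fin d → ℂ) (lam : ℂ) (heig : H.mulVec f = lam • f)
    (hf1 : f u1 ≠ 0) (γ : ℝ) (hγ : γ ≠ 0) (hγeq : f u2 / f u1 = (γ : ℂ)) :
    (cutMat H u1 u2 γ).mulVec f = lam • f := by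
  rw [cutMat_eq_edgeCut hne h12 h21]
  exact cut_preserves_eigenvector_general (Complex.ofReal_ne_zero.mpr hγ)
    ((div_eq_iff hf1).mp hγeq) heig
end

section
/- Let f : ℝ^k × ℝ^m → ℝ be a smooth function such that (0,0) is a non-degenerate critical point of f with inertia I_X. Suppose that for every y ∈ ℝ^k in a neighborhood of 0, the function y' ↦ f(y, y') has a critical point at y' = 0 whose inertia I_{Y⊥} (as a critical point of a function of y' alone) does not depend on y. Then all mixed second partial derivatives ∂²f/∂y_i∂y'_j vanish at (0,0), so the Hessian of f at (0,0) is block-diagonal with respect to the splitting ℝ^k ⊕ ℝ^m, and the inertia of the critical point 0 of the restricted function y ↦ f(y, 0) equals I_X − I_{Y⊥} (componentwise difference of the triples). -/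
open Matrix

/-- The Hessian matrix of second partial derivatives of `f : ℝ^k → ℝ` at `x₀`. -/
noncomputable def hessMat {k : ℕ} (f : (Fin k → ℝ) → ℝ) (x₀ : Fin k → ℝ) :
    Matrix (Fin k) (Fin k) ℝ :=
  Matrix.of fun i j => fderiv ℝ (fun x => fderiv ℝ f x (Pi.single j 1)) x₀ (Pi.single i 1)

/-- Numbers of negative / zero / positive eigenvalues of a real symmetric matrix. -/
noncomputable def negEigCount {k : ℕ} (M : Matrix (Fin k) (Fin k) ℝ) : ℕ :=
  {i : Fin k | sortedEigs M i < 0}.ncard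

noncomputable def zeroEigCount {k : ℕ} (M : Matrix (Fin k) (Fin k) ℝ) : ℕ :=
  {i : Fin k | sortedEigs M i = 0}.ncard

noncomputable def posEigCount {k : ℕ} (M : Matrix (Fin k) (Fin k) ℝ) : ℕ :=
  {i : Fin k | 0 < sortedEigs M i}.ncard

/-
With `A (y, y') = Fin.append y y'` and `g = f ∘ A`, the critical point condition says that `∂g/∂y'`
vanishes at `(y, 0)` for all `y` near `0`, so differentiating it in `y` kills the mixed second
derivatives at the origin. The diagonal blocks of the Hessian are the Hessians of the two
restrictions of `f`, by the chain rule for `f ∘ L` with `L` linear. The characteristic polynomial of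
a matrix with a zero off-diagonal block is the product of those of the diagonal blocks, so the
spectrum of the Hessian is the disjoint union of the spectra of the blocks and each eigenvalue count
is additive.
-/

open scoped Topology

section SecondDerivative

variable {𝕜 E F G : Type*} [NontriviallyNormedField 𝕜] [NormedAddCommGroup E] [NormedSpace 𝕜 E]
  [NormedAddCommGroup F] [NormedSpace 𝕜 F] [NormedAddCommGroup G] [NormedSpace 𝕜 G]

theorem differentiableAt_fderiv_of_contDiffAt {f : E → F} {x : E} (hf : ContDiffAt 𝕜 2 f x) :
    DifferentiableAt 𝕜 (fderiv 𝕜 f) x :=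
  (hf.fderiv_right (m := 1) one_add_one_eq_two.le).differentiableAt one_ne_zero

theorem fderiv_fderiv_comp_continuousLinearMap {f : F → G} {L : E →L[𝕜] F} {x : E}
    (hf : ContDiffAt 𝕜 2 f (L x)) (u v : E) :
    fderiv 𝕜 (fderiv 𝕜 (f ∘ L)) x u v = fderiv 𝕜 (fderiv 𝕜 f) (L x) (L u) (L v) := by
  have hfirst : fderiv 𝕜 (f ∘ L) =ᶠ[𝓝 x] fun y => (fderiv 𝕜 f (L y)).comp L := by
    filter_upwards [L.continuous.continuousAt.eventually (hf.eventually (by simp))] with y hy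
    exact ((hy.differentiableAt two_ne_zero).hasFDerivAt.comp y L.hasFDerivAt).fderiv
  have hsecond :=
    ((differentiableAt_fderiv_of_contDiffAt hf).hasFDerivAt.comp x L.hasFDerivAt).clm_comp
      (hasFDerivAt_const L x)
  simpa using congr($((hsecond.congr_of_eventuallyEq hfirst).fderiv) u v)

theorem fderiv_fderiv_inl_inr_eq_zero {g : E × F → G} {x : E} {y : F}
    (hg : ContDiffAt 𝕜 2 g (x, y)) (hcrit : ∀ᶠ x' in 𝓝 x, fderiv 𝕜 (fun y' => g (x', y')) y = 0)
    (u : E) (v : F) : fderiv 𝕜 (fderiv 𝕜 g) (x, y) (u, 0) (0, v) = 0 := by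
  have hslice : HasFDerivAt (fun x' => (x', y)) (.inl 𝕜 E F) x := hasFDerivAt_prodMk_left x y
  have hpartial : (fun x' => fderiv 𝕜 g (x', y) (0, v)) =ᶠ[𝓝 x] fun _ => 0 := by
    filter_upwards [hcrit, hslice.continuousAt.eventually (hg.eventually (by simp))]
      with x' hx' hgx'
    have hchain := ((hgx'.differentiableAt two_ne_zero).hasFDerivAt.comp y
      (hasFDerivAt_prodMk_right x' y)).fderiv
    simpa using congr($(hchain.symm.trans hx') v)
  have hderiv := ((differentiableAt_fderiv_of_contDiffAt hg).hasFDerivAt.comp x hslice).clm_apply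
    (hasFDerivAt_const ((0 : E), v) x)
  simpa using congr($(hderiv.fderiv.symm.trans (hpartial.fderiv_eq (𝕜 := 𝕜))) u)

end SecondDerivative

section Hessian

theorem hessMat_apply {n : ℕ} {f : (Fin n → ℝ) → ℝ} {x : Fin n → ℝ}
    (hf : DifferentiableAt ℝ (fderiv ℝ f) x) (i j : Fin n) :
    hessMat f x i j = fderiv ℝ (fderiv ℝ f) x (Pi.single i 1) (Pi.single j 1) := by
  simp [hessMat, fderiv_clm_apply hf (differentiableAt_const _)]

theorem isHermitian_hessMat {n : ℕ} {f : (Fin n → ℝ) → ℝ} {x : Fin n → ℝ}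
    (hf : ContDiffAt ℝ 2 f x) : (hessMat f x).IsHermitian := by
  have hsymm : IsSymmSndFDerivAt ℝ f x := hf.isSymmSndFDerivAt (by simp)
  ext i j
  simpa [hessMat_apply (differentiableAt_fderiv_of_contDiffAt hf)] using hsymm.eq _ _

theorem hessMat_comp_eq_submatrix {p n : ℕ} {f : (Fin n → ℝ) → ℝ}
    {L : (Fin p → ℝ) →L[ℝ] (Fin n → ℝ)} {e : Fin p → Fin n}
    (hL : ∀ i, L (Pi.single i 1) = Pi.single (e i) 1) {x : Fin p → ℝ}
    (hf : ContDiffAt ℝ 2 f (L x)) :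
    hessMat (f ∘ L) x = (hessMat f (L x)).submatrix e e := by
  have hfL : ContDiffAt ℝ 2 (f ∘ L) x := hf.comp x L.contDiff.contDiffAt
  ext i j
  rw [hessMat_apply (differentiableAt_fderiv_of_contDiffAt hfL), submatrix_apply,
    hessMat_apply (differentiableAt_fderiv_of_contDiffAt hf),
    fderiv_fderiv_comp_continuousLinearMap hf, hL, hL]

/-- Concatenation of vectors, as a continuous linear map `ℝ^k × ℝ^m → ℝ^(k + m)`. It transports
the splitting `ℝ^k ⊕ ℝ^m` of the paper to the coordinate space on which `f` is defined. -/
def appendCLM (k m : ℕ) : (Fin k → ℝ) × (Fin m → ℝ) →L[ℝ] (Fin (k + m) → ℝ) where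
  toFun p := Fin.append p.1 p.2
  map_add' _ _ := by ext i; refine Fin.addCases (fun _ => ?_) (fun _ => ?_) i <;> simp
  map_smul' _ _ := by ext i; refine Fin.addCases (fun _ => ?_) (fun _ => ?_) i <;> simp
  cont := Fin.continuous_append k m

variable {k m : ℕ}

theorem appendCLM_single_zero (i : Fin k) :
    appendCLM k m (Pi.single i 1, 0) = Pi.single (Fin.castAdd m i) 1 := by
  ext j
  refine Fin.addCases (fun j => ?_) (fun j => ?_) j <;>
    simp [appendCLM, Pi.single_apply, Fin.ext_iff]
  omega

theorem appendCLM_zero_single (j : Fin m) :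
    appendCLM k m (0, Pi.single j 1) = Pi.single (Fin.natAdd k j) 1 := by
  ext i
  refine Fin.addCases (fun i => ?_) (fun i => ?_) i <;>
    simp [appendCLM, Pi.single_apply, Fin.ext_iff]
  omega

variable {f : (Fin (k + m) → ℝ) → ℝ}

theorem hessMat_append_zero_right (hf : ContDiffAt ℝ 2 f 0) :
    hessMat (fun y : Fin k → ℝ => f (Fin.append y 0)) 0 =
      (hessMat f 0).submatrix (Fin.castAdd m) (Fin.castAdd m) := by
  let L := (appendCLM k m).comp (.inl ℝ _ _)
  have hL0 : L 0 = 0 := map_zero L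
  rw [← hL0] at hf ⊢
  exact hessMat_comp_eq_submatrix appendCLM_single_zero hf

theorem hessMat_append_zero_left (hf : ContDiffAt ℝ 2 f 0) :
    hessMat (fun y' : Fin m → ℝ => f (Fin.append 0 y')) 0 =
      (hessMat f 0).submatrix (Fin.natAdd k) (Fin.natAdd k) := by
  let L := (appendCLM k m).comp (.inr ℝ _ _)
  have hL0 : L 0 = 0 := map_zero L
  rw [← hL0] at hf ⊢
  exact hessMat_comp_eq_submatrix appendCLM_zero_single hf

theorem hessMat_castAdd_natAdd_eq_zero (hf : ContDiffAt ℝ 2 f 0)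
    (hcrit : ∀ᶠ y in 𝓝 (0 : Fin k → ℝ),
      fderiv ℝ (fun y' : Fin m → ℝ => f (Fin.append y y')) 0 = 0)
    (i : Fin k) (j : Fin m) :
    hessMat f 0 (Fin.castAdd m i) (Fin.natAdd k j) = 0 := by
  have hA0 : appendCLM k m (0, 0) = 0 := map_zero _
  rw [← hA0] at hf ⊢
  have hg : ContDiffAt ℝ 2 (f ∘ appendCLM k m) (0, 0) :=
    hf.comp _ (appendCLM k m).contDiff.contDiffAt
  rw [hessMat_apply (differentiableAt_fderiv_of_contDiffAt hf), ← appendCLM_single_zero,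
    ← appendCLM_zero_single, ← fderiv_fderiv_comp_continuousLinearMap hf]
  exact fderiv_fderiv_inl_inr_eq_zero hg hcrit _ _

end Hessian

section Inertia

theorem charpoly_eq_mul_of_castAdd_natAdd_eq_zero {R : Type*} [CommRing R] {k m : ℕ}
    {M : Matrix (Fin (k + m)) (Fin (k + m)) R}
    (hM : ∀ i j, M (Fin.castAdd m i) (Fin.natAdd k j) = 0) :
    M.charpoly = (M.submatrix (Fin.castAdd m) (Fin.castAdd m)).charpoly *
      (M.submatrix (Fin.natAdd k) (Fin.natAdd k)).charpoly := by
  have hblocks : M.reindex finSumFinEquiv.symm finSumFinEquiv.symm =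
      fromBlocks (M.submatrix (Fin.castAdd m) (Fin.castAdd m)) 0
        (M.submatrix (Fin.natAdd k) (Fin.castAdd m))
        (M.submatrix (Fin.natAdd k) (Fin.natAdd k)) := by
    ext (i | i) (j | j) <;> simp [hM]
  rw [← charpoly_reindex finSumFinEquiv.symm M, hblocks, charpoly_fromBlocks_zero₁₂]

variable {𝕜 : Type*} [RCLike 𝕜]

theorem roots_charpoly_eq_map_sortedEigs {n : ℕ} {M : Matrix (Fin n) (Fin n) 𝕜}
    (hM : M.IsHermitian) :
    M.charpoly.roots = (Finset.univ.val.map (sortedEigs M)).map RCLike.ofReal := by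
  have hsort : (Finset.univ.val.map (Tuple.sort hM.eigenvalues)) = Finset.univ.val :=
    congrArg Finset.val (Finset.map_univ_equiv (Tuple.sort hM.eigenvalues))
  rw [hM.roots_charpoly_eq_eigenvalues, sortedEigs, dif_pos hM,
    ← Multiset.map_map hM.eigenvalues, hsort, Multiset.map_map]

theorem map_sortedEigs_eq_add {k m : ℕ} {M : Matrix (Fin (k + m)) (Fin (k + m)) 𝕜}
    (hM : M.IsHermitian) (hzero : ∀ i j, M (Fin.castAdd m i) (Fin.natAdd k j) = 0) :
    Finset.univ.val.map (sortedEigs M) =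
      Finset.univ.val.map (sortedEigs (M.submatrix (Fin.castAdd m) (Fin.castAdd m))) +
        Finset.univ.val.map (sortedEigs (M.submatrix (Fin.natAdd k) (Fin.natAdd k))) := by
  apply Multiset.map_injective (RCLike.ofReal_injective (K := 𝕜))
  rw [Multiset.map_add, ← roots_charpoly_eq_map_sortedEigs hM,
    ← roots_charpoly_eq_map_sortedEigs (hM.submatrix _),
    ← roots_charpoly_eq_map_sortedEigs (hM.submatrix _),
    charpoly_eq_mul_of_castAdd_natAdd_eq_zero hzero, Polynomial.roots_mul
      (mul_ne_zero (charpoly_monic _).ne_zero (charpoly_monic _).ne_zero)]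

theorem ncard_setOf_eq_countP_map {ι α : Type*} [Fintype ι] (g : ι → α) (P : α → Prop)
    [DecidablePred P] : {i | P (g i)}.ncard = (Finset.univ.val.map g).countP P := by
  rw [Multiset.countP_map, Set.ncard_eq_toFinset_card', Set.toFinset_ofPred]
  rfl

theorem ncard_sortedEigs_eq_add {k m : ℕ} {M : Matrix (Fin (k + m)) (Fin (k + m)) 𝕜}
    (hM : M.IsHermitian) (hzero : ∀ i j, M (Fin.castAdd m i) (Fin.natAdd k j) = 0)
    (P : ℝ → Prop) :
    {i | P (sortedEigs M i)}.ncard =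
      {i | P (sortedEigs (M.submatrix (Fin.castAdd m) (Fin.castAdd m)) i)}.ncard +
        {i | P (sortedEigs (M.submatrix (Fin.natAdd k) (Fin.natAdd k)) i)}.ncard := by
  classical
  simp only [ncard_setOf_eq_countP_map, map_sortedEigs_eq_add hM hzero, Multiset.countP_add]

end Inertia

theorem reduction_theorem_general {k m : ℕ} {f : (Fin (k + m) → ℝ) → ℝ} (hf : ContDiffAt ℝ 2 f 0)
    (hcrit : ∀ᶠ y in 𝓝 (0 : Fin k → ℝ),
      fderiv ℝ (fun y' : Fin m → ℝ => f (Fin.append y y')) 0 = 0) :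
    (∀ (i : Fin k) (j : Fin m), hessMat f 0 (Fin.castAdd m i) (Fin.natAdd k j) = 0) ∧
    negEigCount (hessMat (fun y : Fin k → ℝ => f (Fin.append y 0)) 0) +
      negEigCount (hessMat (fun y' : Fin m → ℝ => f (Fin.append 0 y')) 0) =
        negEigCount (hessMat f 0) ∧
    zeroEigCount (hessMat (fun y : Fin k → ℝ => f (Fin.append y 0)) 0) +
      zeroEigCount (hessMat (fun y' : Fin m → ℝ => f (Fin.append 0 y')) 0) =
        zeroEigCount (hessMat f 0) ∧
    posEigCount (hessMat (fun y : Fin k → ℝ => f (Fin.append y 0)) 0) +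
      posEigCount (hessMat (fun y' : Fin m → ℝ => f (Fin.append 0 y')) 0) =
        posEigCount (hessMat f 0) := by
  have hmixed := hessMat_castAdd_natAdd_eq_zero hf hcrit
  have hcount := ncard_sortedEigs_eq_add (isHermitian_hessMat hf) hmixed
  rw [hessMat_append_zero_right hf, hessMat_append_zero_left hf]
  exact ⟨hmixed, (hcount (· < 0)).symm, (hcount (· = 0)).symm, (hcount (0 < ·)).symm⟩

/-- Reduction Theorem: if `(0,0) ∈ ℝ^k × ℝ^m` is a non-degenerate critical
point of a smooth `f` with inertia `I_X = (a, 0, c)`, and for every `y` near `0` the map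
`y' ↦ f(y, y')` has a critical point at `y' = 0` with constant inertia `I_{Y⊥} = (a', b', c')`,
then the mixed second partials vanish at `(0,0)` (the Hessian is block-diagonal) and the
inertia of the critical point `0` of `y ↦ f(y, 0)` is `I_X - I_{Y⊥}` (equivalently,
`I_X = I_Y + I_{Y⊥}`, stated additively to avoid truncated subtraction). -/
theorem reduction_theorem {k m : ℕ} (f : (Fin (k + m) → ℝ) → ℝ)
    (hf : ContDiff ℝ (⊤ : ℕ∞) f)
    (a c a' b' c' : ℕ)
    (hcrit : fderiv ℝ f 0 = 0)
    (hneg : negEigCount (hessMat f 0) = a)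
    (hzero : zeroEigCount (hessMat f 0) = 0)
    (hpos : posEigCount (hessMat f 0) = c)
    (hsub : ∀ᶠ y in nhds (0 : Fin k → ℝ),
      fderiv ℝ (fun y' : Fin m → ℝ => f (Fin.append y y')) 0 = 0 ∧
      negEigCount (hessMat (fun y' => f (Fin.append y y')) 0) = a' ∧
      zeroEigCount (hessMat (fun y' => f (Fin.append y y')) 0) = b' ∧
      posEigCount (hessMat (fun y' => f (Fin.append y y')) 0) = c') :
    (∀ (i : Fin k) (j : Fin m),
      hessMat f 0 (Fin.castAdd m i) (Fin.natAdd k j) = 0) ∧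
    negEigCount (hessMat (fun y : Fin k → ℝ => f (Fin.append y 0)) 0) + a' = a ∧
    zeroEigCount (hessMat (fun y : Fin k → ℝ => f (Fin.append y 0)) 0) + b' = 0 ∧
    posEigCount (hessMat (fun y : Fin k → ℝ => f (Fin.append y 0)) 0) + c' = c := by
  obtain ⟨-, hneg', hzero', hpos'⟩ := hsub.self_of_nhds
  simpa only [hneg, hzero, hpos, hneg', hzero', hpos'] using
    reduction_theorem_general (contDiff_infty.mp hf 2).contDiffAt (hsub.mono fun _ hy => hy.1)
end

section
/- Let Γ = (V,E) be a simple finite connected graph, q : V → ℝ a potential, and H(Γ) = Q − C the discrete Schrödinger operator, where Q = diag(q) and C is the adjacency matrix of Γ. Let β = |E| − |V| + 1, fix a spanning tree of Γ, and let S = {e_1, …, e_β} be the edges not in the tree, with e_j = (u_j, v_j). Suppose f is an eigenvector of H(Γ) corresponding to a simple eigenvalue λ = λ_n(H(Γ)) and f is nonzero at every vertex. Let φ be the number of edges (u,v) ∈ E with f_u f_v < 0. Set γ̃_j = f_{v_j}/f_{u_j} for j = 1,…,β, and let p = #{j : γ̃_j < 0}. Let H(Γ^cut_{γ̃_1,…,γ̃_β})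 be the matrix obtained from H(Γ) by, for each j, setting the (u_j,v_j) and (v_j,u_j) entries to 0 and replacing the diagonal entries q_{u_j}, q_{v_j} by q_{u_j} − γ̃_j and q_{v_j} − 1/γ̃_j. Then λ_n(H(Γ)) = λ_{φ−p+1}(H(Γ^cut_{γ̃_1,…,γ̃_β})), i.e. λ is the (φ−p+1)-th smallest eigenvalue of the cut operator. -/
open Matrix

noncomputable def sE {𝕜 : Type*} [RCLike 𝕜] {d : ℕ} (M : Matrix (Fin d) (Fin d) 𝕜)
    (i : ℕ) : ℝ :=
  if h : i < d then sortedEigs M ⟨i, h⟩ else 0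

/-- The discrete Schrödinger operator `H(Γ) = Q - C` of a graph `G` with potential `q`. -/
noncomputable def schrodOp {N : ℕ} (G : SimpleGraph (Fin N)) [DecidableRel G.Adj]
    (q : Fin N → ℝ) : Matrix (Fin N) (Fin N) ℝ :=
  Matrix.diagonal q - G.adjMatrix ℝ

/-- The cut operator `H(Γ^cut_γ)`: for each `j`, the matrix entries at `(uE j, vE j)` and
`(vE j, uE j)` (equal to `-1` in `H(Γ)`) are replaced by `0` and the diagonal entries at
`uE j`, `vE j` are decreased by `γ j` and `(γ j)⁻¹` respectively. -/
noncomputable def schrodCut {N β : ℕ} (G : SimpleGraph (Fin N)) [DecidableRel G.Adj]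
    (q : Fin N → ℝ) (uE vE : Fin β → Fin N) (γ : Fin β → ℝ) :
    Matrix (Fin N) (Fin N) ℝ :=
  schrodOp G q - ∑ j : Fin β, Matrix.of (fun a b =>
    if a = uE j ∧ b = uE j then γ j
    else if a = vE j ∧ b = vE j then (γ j)⁻¹
    else if (a = uE j ∧ b = vE j) ∨ (a = vE j ∧ b = uE j) then -1
    else 0)

/-- The magnetic operator `H(Γ^α_mag)`: the entries of `H(Γ)` at `(uE j, vE j)` and
`(vE j, uE j)` (equal to `-1`) are replaced by `-exp(i α j)` and `-exp(-i α j)`. -/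
noncomputable def schrodMag {N β : ℕ} (G : SimpleGraph (Fin N)) [DecidableRel G.Adj]
    (q : Fin N → ℝ) (uE vE : Fin β → Fin N) (α : Fin β → ℝ) :
    Matrix (Fin N) (Fin N) ℂ :=
  (schrodOp G q).map (fun x => (x : ℂ)) + ∑ j : Fin β, Matrix.of (fun a b =>
    if a = uE j ∧ b = vE j then 1 - Complex.exp (Complex.I * (α j : ℝ))
    else if a = vE j ∧ b = uE j then 1 - Complex.exp (-(Complex.I * (α j : ℝ)))
    else 0)

/-- The number of sign changes ("zeros") of a vertex function `f`: the number of edges of `G`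
at whose endpoints `f` has different signs. -/
noncomputable def signChanges {N : ℕ} (G : SimpleGraph (Fin N)) (f : Fin N → ℝ) : ℕ :=
  {e : Sym2 (Fin N) | e ∈ G.edgeSet ∧ ∀ u v : Fin N, e = s(u, v) → f u * f v < 0}.ncard

/-
If `f` has no zero and `A f = μ f` for a Schrödinger operator `A`, the congruence by `diag f` turns
`A - μ` into a form annihilating the constants, that is, into `∑ w_{uv} (y_u - y_v)²` over the
edges, where the sign of `w_{uv}` is that of `f_u f_v`. Making the differences vanish on the edges
of one sign shows that at most `#{sign-changing edges}` eigenvalues lie below `μ` and at most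
`#{other edges}` above it. On a graph with fewer edges than vertices, such as a tree, these two
bounds leave only one index for `μ`. Each cut with parameter `f_v / f_u` subtracts a matrix that
kills `f`, so `f` is still an eigenvector of the cut operator, whose graph has `φ - p`
sign-changing edges.
-/

section QuadraticForm

variable {V K : Type*} [Fintype V] [DecidableEq V]

theorem toQuadraticForm'_apply [CommRing K] (M : Matrix V V K) (x : V → K) :
    M.toQuadraticForm' x = x ⬝ᵥ M *ᵥ x :=
  toLinearMap₂'_apply' M x x

theorem toQuadraticForm'_neg [CommRing K] (M : Matrix V V K) :
    (-M).toQuadraticForm' = -M.toQuadraticForm' := by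
  ext x
  simp only [toQuadraticForm'_apply, _root_.neg_apply, neg_mulVec, dotProduct_neg]

theorem equivalent_toQuadraticForm'_transpose_mul_mul [CommRing K] (M : Matrix V V K)
    {P : Matrix V V K} (hP : IsUnit P) :
    (Pᵀ * M * P).toQuadraticForm'.Equivalent M.toQuadraticForm' := by
  refine ⟨⟨P.toLinearEquiv' hP.invertible, fun x => ?_⟩⟩
  change M.toQuadraticForm' (P *ᵥ x) = _
  rw [toQuadraticForm'_apply, toQuadraticForm'_apply, mul_assoc, ← mulVec_mulVec, ← mulVec_mulVec,
    dotProduct_mulVec x, vecMul_transpose]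

theorem toQuadraticForm'_diagonal [CommRing K] (w : V → K) :
    (diagonal w).toQuadraticForm' = QuadraticMap.weightedSumSquares K w := by
  ext x
  simp only [toQuadraticForm'_apply, QuadraticMap.weightedSumSquares_apply, dotProduct,
    mulVec_diagonal, smul_eq_mul]
  exact Finset.sum_congr rfl fun i _ => by ring

theorem transpose_mul_sub_scalar_mul_eigenvectorUnitary {A : Matrix V V ℝ} (hA : A.IsHermitian)
    (μ : ℝ) :
    (hA.eigenvectorUnitary : Matrix V V ℝ)ᵀ * (A - scalar V μ) * hA.eigenvectorUnitary =
      diagonal fun i => hA.eigenvalues i - μ := by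
  have hdiag := hA.conjStarAlgAut_star_eigenvectorUnitary
  rw [Unitary.conjStarAlgAut_star_apply, star_eq_conjTranspose,
    conjTranspose_eq_transpose_of_trivial] at hdiag
  have hunit : (hA.eigenvectorUnitary : Matrix V V ℝ)ᵀ * hA.eigenvectorUnitary = 1 :=
    Unitary.coe_star_mul_self hA.eigenvectorUnitary
  rw [mul_sub, sub_mul, hdiag, ← (scalar_commute μ (Commute.all μ) _).eq, mul_assoc, hunit,
    mul_one]
  exact diagonal_sub _ _

theorem equivalent_weightedSumSquares_eigenvalues_sub {A : Matrix V V ℝ} (hA : A.IsHermitian)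
    (μ : ℝ) :
    (A - scalar V μ).toQuadraticForm'.Equivalent
      (QuadraticMap.weightedSumSquares ℝ fun i => hA.eigenvalues i - μ) := by
  rw [← toQuadraticForm'_diagonal, ← transpose_mul_sub_scalar_mul_eigenvectorUnitary hA]
  exact (equivalent_toQuadraticForm'_transpose_mul_mul _ Unitary.isUnit_coe).symm

theorem sigPos_sub_scalar_eq_ncard {A : Matrix V V ℝ} (hA : A.IsHermitian) (μ : ℝ) :
    sigPos (A - scalar V μ).toQuadraticForm' = {i | μ < hA.eigenvalues i}.ncard := by
  simpa only [sub_pos] using QuadraticForm.sigPos_of_equiv_weightedSumSquares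
    (equivalent_weightedSumSquares_eigenvalues_sub hA μ)

theorem sigNeg_sub_scalar_eq_ncard {A : Matrix V V ℝ} (hA : A.IsHermitian) (μ : ℝ) :
    sigNeg (A - scalar V μ).toQuadraticForm' = {i | hA.eigenvalues i < μ}.ncard := by
  simpa only [sub_neg] using QuadraticForm.sigNeg_of_equiv_weightedSumSquares
    (equivalent_weightedSumSquares_eigenvalues_sub hA μ)

theorem two_mul_toQuadraticForm'_of_mulVec_one_eq_zero [CommRing K] {M : Matrix V V K}
    (hM : M.IsSymm) (hone : M *ᵥ 1 = 0) (y : V → K) :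
    2 * M.toQuadraticForm' y = -∑ u, ∑ v, M u v * (y u - y v) ^ 2 := by
  have hrow : ∑ u, ∑ v, M u v * y u ^ 2 = 0 := by
    refine Finset.sum_eq_zero fun u _ => ?_
    have hu : ∑ v, M u v = 0 := by simpa [mulVec, dotProduct] using congrFun hone u
    rw [← Finset.sum_mul, hu, zero_mul]
  have hcol : ∑ u, ∑ v, M u v * y v ^ 2 = 0 := by
    rw [Finset.sum_comm, ← hrow]
    simp only [hM.apply]
  have hform : M.toQuadraticForm' y = ∑ u, ∑ v, M u v * (y u * y v) := by
    simp only [toQuadraticForm'_apply, dotProduct, mulVec, Finset.mul_sum]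
    exact Finset.sum_congr rfl fun u _ => Finset.sum_congr rfl fun v _ => by ring
  calc 2 * M.toQuadraticForm' y
      = -(∑ u, ∑ v, M u v * y u ^ 2 + ∑ u, ∑ v, M u v * y v ^ 2
          - 2 * ∑ u, ∑ v, M u v * (y u * y v)) := by rw [hrow, hcol, hform]; ring
    _ = -∑ u, ∑ v, M u v * (y u - y v) ^ 2 := by
      simp only [Finset.mul_sum, ← Finset.sum_add_distrib, ← Finset.sum_sub_distrib]
      exact congrArg _ (Finset.sum_congr rfl fun u _ => Finset.sum_congr rfl fun v _ => by ring)

end QuadraticForm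

section EdgeDifferences

variable {V : Type*} (K : Type*) [Field K]

/-- The coboundary operator of the graph with edge set `F`: it takes a vertex function to its
differences along the edges. Each edge carries the arbitrary orientation given by `Quot.out`. -/
noncomputable def edgeDifferences (F : Set (Sym2 V)) : (V → K) →ₗ[K] (F → K) :=
  LinearMap.funLeft K K (fun e : F => e.1.out.1) - LinearMap.funLeft K K fun e : F => e.1.out.2

variable {K}

theorem eq_of_mem_ker_edgeDifferences {F : Set (Sym2 V)} {y : V → K}
    (hy : y ∈ LinearMap.ker (edgeDifferences K F)) {u v : V} (huv : s(u, v) ∈ F) : y u = y v := by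
  have hout : y s(u, v).out.1 = y s(u, v).out.2 :=
    sub_eq_zero.mp (congrFun (LinearMap.mem_ker.mp hy) ⟨s(u, v), huv⟩)
  have hmk : s(s(u, v).out.1, s(u, v).out.2) = s(u, v) := Quot.out_eq _
  rcases Sym2.eq_iff.mp hmk with ⟨h₁, h₂⟩ | ⟨h₁, h₂⟩
  · rwa [h₁, h₂] at hout
  · rw [h₁, h₂] at hout
    exact hout.symm

theorem card_le_ncard_add_finrank_ker_edgeDifferences [Fintype V] (F : Set (Sym2 V)) :
    Fintype.card V ≤ F.ncard + Module.finrank K (LinearMap.ker (edgeDifferences K F)) := by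
  classical
  have hrange := (LinearMap.range (edgeDifferences K F)).finrank_le
  have hrank := (edgeDifferences K F).finrank_range_add_finrank_ker
  rw [Module.finrank_fintype_fun_eq_card, ← Nat.card_eq_fintype_card, Nat.card_coe_set_eq]
    at hrange
  rw [Module.finrank_fintype_fun_eq_card] at hrank
  omega

end EdgeDifferences

section NodalCount

variable {V K : Type*} [Fintype V] [DecidableEq V] [Field K] [LinearOrder K]
  [IsStrictOrderedRing K] {M : Matrix V V K} {F : Set (Sym2 V)} {f : V → K}

theorem sigPos_le_ncard_of_mulVec_one_eq_zero (hM : M.IsSymm) (hone : M *ᵥ 1 = 0)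
    (hF : ∀ u v, u ≠ v → s(u, v) ∉ F → 0 ≤ M u v) :
    sigPos M.toQuadraticForm' ≤ F.ncard := by
  have hnonpos : ∀ y ∈ LinearMap.ker (edgeDifferences K F), M.toQuadraticForm' y ≤ 0 := by
    intro y hy
    have hterm : ∀ u v, 0 ≤ M u v * (y u - y v) ^ 2 := by
      intro u v
      by_cases huv : y u = y v
      · simp [huv]
      · exact mul_nonneg (hF u v (fun h => huv (h ▸ rfl))
          fun h => huv (eq_of_mem_ker_edgeDifferences hy h)) (sq_nonneg _)
    have hsum : 0 ≤ ∑ u, ∑ v, M u v * (y u - y v) ^ 2 :=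
      Finset.sum_nonneg fun u _ => Finset.sum_nonneg fun v _ => hterm u v
    linarith [two_mul_toQuadraticForm'_of_mulVec_one_eq_zero hM hone y]
  have hsig := QuadraticForm.sigPos_add_finrank_le_of_nonpos hnonpos
  rw [Module.finrank_fintype_fun_eq_card] at hsig
  have hker := card_le_ncard_add_finrank_ker_edgeDifferences (K := K) F
  omega

-- The congruence by `diagonal f` moves the kernel vector `f` to the constant vector `1`.
theorem sigPos_le_ncard_of_mulVec_eq_zero (hM : M.IsSymm) (hf : M *ᵥ f = 0) (hf0 : ∀ v, f v ≠ 0)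
    (hF : ∀ u v, u ≠ v → s(u, v) ∉ F → 0 ≤ M u v * (f u * f v)) :
    sigPos M.toQuadraticForm' ≤ F.ncard := by
  have hunit : IsUnit (diagonal f) :=
    isUnit_diagonal.mpr (Pi.isUnit_iff.mpr fun v => (hf0 v).isUnit)
  have hone : diagonal f *ᵥ 1 = f := by ext v; simp [mulVec_diagonal]
  rw [← (equivalent_toQuadraticForm'_transpose_mul_mul M hunit).sigPos_eq]
  apply sigPos_le_ncard_of_mulVec_one_eq_zero
  · simp only [IsSymm, transpose_mul, transpose_transpose, hM.eq, mul_assoc]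
  · rw [← mulVec_mulVec, ← mulVec_mulVec, hone, hf, mulVec_zero]
  · intro u v huv he
    rw [diagonal_transpose, mul_diagonal, diagonal_mul]
    linarith [hF u v huv he]

theorem sigNeg_le_ncard_of_mulVec_eq_zero (hM : M.IsSymm) (hf : M *ᵥ f = 0) (hf0 : ∀ v, f v ≠ 0)
    (hF : ∀ u v, u ≠ v → s(u, v) ∉ F → M u v * (f u * f v) ≤ 0) :
    sigNeg M.toQuadraticForm' ≤ F.ncard := by
  rw [← sigPos_neg, ← toQuadraticForm'_neg]
  refine sigPos_le_ncard_of_mulVec_eq_zero hM.neg (by rw [neg_mulVec, hf, neg_zero]) hf0 ?_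
  intro u v huv he
  rw [neg_apply, neg_mul]
  exact neg_nonneg.mpr (hF u v huv he)

end NodalCount

theorem sE_eq_of_ncard {𝕜 : Type*} [RCLike 𝕜] {d k : ℕ} {A : Matrix (Fin d) (Fin d) 𝕜}
    (hA : A.IsHermitian) {μ : ℝ} (hlt : {i | hA.eigenvalues i < μ}.ncard ≤ k)
    (hgt : {i | μ < hA.eigenvalues i}.ncard + k < d) : sE A k = μ := by
  have hk : k < d := by omega
  set sorted : Fin d → ℝ := hA.eigenvalues ∘ Tuple.sort hA.eigenvalues
  have hcard : ∀ P : ℝ → Prop, {i | P (sorted i)}.ncard = {i | P (hA.eigenvalues i)}.ncard :=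
    fun P => Set.ncard_preimage_of_injective_subset_range (s := {i | P (hA.eigenvalues i)})
      (Tuple.sort hA.eigenvalues).injective (by simp)
  have hmono : Monotone sorted := Tuple.monotone_sort _
  have hcompl : {i | sorted i ≤ μ}.ncard + {i | μ < sorted i}.ncard = d := by
    have h := Set.ncard_add_ncard_compl {i | sorted i ≤ μ}
    simpa only [Set.compl_ofPred, not_le, Nat.card_fin] using h
  rw [sE, dif_pos hk, sortedEigs, dif_pos hA]
  apply le_antisymm
  · have hlt_card : k < {i | sorted i ≤ μ}.ncard := by
      have := hcard (μ < ·)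
      omega
    rw [Set.ncard_eq_toFinset_card', Set.toFinset_ofPred] at hlt_card
    exact (Tuple.lt_card_le_iff_apply_le_of_monotone (j := ⟨k, hk⟩) hmono).mp hlt_card
  · have hcard_le : {i | sorted i < μ}.ncard ≤ k := (hcard (· < μ)).trans_le hlt
    rw [Set.ncard_eq_toFinset_card', Set.toFinset_ofPred] at hcard_le
    exact not_lt.mp fun h => hcard_le.not_gt
      ((Tuple.lt_card_lt_iff_apply_lt_of_monotone (j := ⟨k, hk⟩) hmono).mpr h)

/-- The pairs of vertices at which `f` takes values of opposite sign, so that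
`signChanges G f` counts the edges of `G` lying in this set. -/
def signChangePairs {V K : Type*} [Mul K] [Zero K] [LT K] (f : V → K) : Set (Sym2 V) :=
  {e | ∀ u v, e = s(u, v) → f u * f v < 0}

theorem mk_mem_signChangePairs {V K : Type*} [CommMonoidWithZero K] [LT K] {f : V → K} {u v : V} :
    s(u, v) ∈ signChangePairs f ↔ f u * f v < 0 := by
  refine ⟨fun h => h u v rfl, fun h a b hab => ?_⟩
  rcases Sym2.eq_iff.mp hab with ⟨rfl, rfl⟩ | ⟨rfl, rfl⟩
  · exact h
  · rwa [mul_comm]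

theorem sE_signChanges_eq {N : ℕ} {T : SimpleGraph (Fin N)} (hT : T.edgeSet.ncard < N)
    {A : Matrix (Fin N) (Fin N) ℝ} (hA : A.IsHermitian) (hnonpos : ∀ u v, T.Adj u v → A u v ≤ 0)
    (hzero : ∀ u v, u ≠ v → ¬T.Adj u v → A u v = 0) {f : Fin N → ℝ} {μ : ℝ}
    (hf : A *ᵥ f = μ • f) (hf0 : ∀ v, f v ≠ 0) : sE A (signChanges T f) = μ := by
  have hsymm : (A - scalar (Fin N) μ).IsSymm :=
    (isHermitian_iff_isSymm.mp hA).sub (isSymm_diagonal _)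
  have hker : (A - scalar (Fin N) μ) *ᵥ f = 0 := by
    rw [sub_mulVec, hf, scalar_apply, ← smul_one_eq_diagonal, smul_mulVec, one_mulVec, sub_self]
  have hoff : ∀ u v, u ≠ v → (A - scalar (Fin N) μ) u v = A u v := fun u v huv => by
    simp [huv]
  have hneg : {i | hA.eigenvalues i < μ}.ncard ≤ (T.edgeSet ∩ signChangePairs f).ncard := by
    rw [← sigNeg_sub_scalar_eq_ncard hA]
    refine sigNeg_le_ncard_of_mulVec_eq_zero hsymm hker hf0 fun u v huv he => ?_
    rw [hoff u v huv]
    by_cases hadj : T.Adj u v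
    · exact mul_nonpos_of_nonpos_of_nonneg (hnonpos u v hadj)
        (not_lt.mp fun h => he ⟨hadj, mk_mem_signChangePairs.mpr h⟩)
    · rw [hzero u v huv hadj, zero_mul]
  have hpos : {i | μ < hA.eigenvalues i}.ncard ≤ (T.edgeSet \ signChangePairs f).ncard := by
    rw [← sigPos_sub_scalar_eq_ncard hA]
    refine sigPos_le_ncard_of_mulVec_eq_zero hsymm hker hf0 fun u v huv he => ?_
    rw [hoff u v huv]
    by_cases hadj : T.Adj u v
    · exact mul_nonneg_of_nonpos_of_nonpos (hnonpos u v hadj)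
        (mk_mem_signChangePairs.mp (not_not.mp fun h => he ⟨hadj, h⟩)).le
    · rw [hzero u v huv hadj, zero_mul]
  have hsplit := Set.ncard_inter_add_ncard_sdiff_eq_ncard T.edgeSet (signChangePairs f)
  exact sE_eq_of_ncard hA hneg (by change _ + (T.edgeSet ∩ signChangePairs f).ncard < N; omega)

section Cut

variable {V K : Type*} [DecidableEq V] [Field K]

/-- The part of the operator carried by a cut edge `(u, v)`: the matrix that `schrodCut` subtracts
from the Schrödinger operator for one edge cut with parameter `γ`. -/
def cutBlock (u v : V) (γ : K) : Matrix V V K :=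
  Matrix.of fun a b =>
    if a = u ∧ b = u then γ
    else if a = v ∧ b = v then γ⁻¹
    else if (a = u ∧ b = v) ∨ (a = v ∧ b = u) then -1
    else 0

theorem cutBlock_apply_of_ne (u v : V) (γ : K) {a b : V} (hab : a ≠ b) :
    cutBlock u v γ a b = if s(u, v) = s(a, b) then -1 else 0 := by
  rw [cutBlock, of_apply, if_neg fun h => hab (h.1.trans h.2.symm),
    if_neg fun h => hab (h.1.trans h.2.symm)]
  simp only [eq_comm (a := s(u, v)), Sym2.eq_iff]

theorem isSymm_cutBlock (u v : V) (γ : K) : (cutBlock u v γ).IsSymm := by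
  refine IsSymm.ext fun a b => ?_
  rcases eq_or_ne a b with rfl | hab
  · rfl
  · rw [cutBlock_apply_of_ne u v γ hab, cutBlock_apply_of_ne u v γ hab.symm, Sym2.eq_swap (a := b)]

theorem cutBlock_mulVec_eq_zero [Fintype V] {f : V → K} {u v : V} (huv : u ≠ v) (hu : f u ≠ 0)
    (hv : f v ≠ 0) : cutBlock u v (f v / f u) *ᵥ f = 0 := by
  ext a
  have hsum : (cutBlock u v (f v / f u) *ᵥ f) a =
      cutBlock u v (f v / f u) a u * f u + cutBlock u v (f v / f u) a v * f v := by
    refine Fintype.sum_eq_add u v huv fun b hb => ?_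
    simp [cutBlock, hb.1, hb.2]
  rw [hsum]
  rcases eq_or_ne a u with rfl | hau
  · simp [cutBlock, huv, huv.symm, hu]
  · rcases eq_or_ne a v with rfl | hav
    · simp [cutBlock, huv, huv.symm, hv]
    · simp [cutBlock, hau, hav]

end Cut

section Schrodinger

variable {N β : ℕ} (G : SimpleGraph (Fin N)) [DecidableRel G.Adj] (q : Fin N → ℝ)
  (uE vE : Fin β → Fin N) (γ : Fin β → ℝ)

theorem schrodCut_eq_sub_sum_cutBlock :
    schrodCut G q uE vE γ = schrodOp G q - ∑ j, cutBlock (uE j) (vE j) (γ j) :=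
  rfl

theorem schrodOp_apply_of_ne {a b : Fin N} (hab : a ≠ b) :
    schrodOp G q a b = if G.Adj a b then -1 else 0 := by
  rw [schrodOp, Matrix.sub_apply, diagonal_apply_ne _ hab, SimpleGraph.adjMatrix_apply]
  split_ifs <;> norm_num

theorem isSymm_schrodCut : (schrodCut G q uE vE γ).IsSymm := by
  refine ((isSymm_diagonal q).sub G.isSymm_adjMatrix).sub ?_
  rw [IsSymm, transpose_sum]
  exact Finset.sum_congr rfl fun j _ => isSymm_cutBlock (uE j) (vE j) (γ j)

variable {uE vE}

theorem schrodCut_apply_of_ne (hadj : ∀ j, G.Adj (uE j) (vE j))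
    (hinj : Function.Injective fun j => s(uE j, vE j)) {a b : Fin N} (hab : a ≠ b) :
    schrodCut G q uE vE γ a b =
      if G.Adj a b ∧ s(a, b) ∉ Set.range (fun j => s(uE j, vE j)) then -1 else 0 := by
  rw [schrodCut_eq_sub_sum_cutBlock, Matrix.sub_apply, schrodOp_apply_of_ne G q hab,
    Matrix.sum_apply]
  simp only [cutBlock_apply_of_ne _ _ _ hab]
  by_cases hcut : s(a, b) ∈ Set.range fun j => s(uE j, vE j)
  · obtain ⟨j, hj⟩ := hcut
    have hab_adj : G.Adj a b := by
      rw [← SimpleGraph.mem_edgeSet, ← hj]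
      exact hadj j
    have hsum : ∑ i, (if s(uE i, vE i) = s(a, b) then (-1 : ℝ) else 0) = -1 := by
      rw [Fintype.sum_eq_single j fun i hij => if_neg fun hi => hij (hinj (hi.trans hj.symm)),
        if_pos hj]
    rw [hsum, if_pos hab_adj, if_neg fun h => h.2 ⟨j, hj⟩, sub_self]
  · have hsum : ∑ i, (if s(uE i, vE i) = s(a, b) then (-1 : ℝ) else 0) = 0 :=
      Finset.sum_eq_zero fun i _ => if_neg fun hi => hcut ⟨i, hi⟩
    simp only [hsum, sub_zero, hcut, not_false_eq_true, and_true]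

theorem schrodCut_mulVec (hne : ∀ j, uE j ≠ vE j) {f : Fin N → ℝ} (hf0 : ∀ v, f v ≠ 0) :
    schrodCut G q uE vE (fun j => f (vE j) / f (uE j)) *ᵥ f = schrodOp G q *ᵥ f := by
  rw [schrodCut_eq_sub_sum_cutBlock, sub_mulVec, sum_mulVec, sub_eq_self]
  exact Finset.sum_eq_zero fun j _ => cutBlock_mulVec_eq_zero (hne j) (hf0 _) (hf0 _)

end Schrodinger

theorem signChanges_deleteEdges {N : ℕ} (G : SimpleGraph (Fin N)) {S : Set (Sym2 (Fin N))}
    (hS : S ⊆ G.edgeSet) (f : Fin N → ℝ) :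
    signChanges (G.deleteEdges S) f = signChanges G f - (S ∩ signChangePairs f).ncard := by
  change ((G.deleteEdges S).edgeSet ∩ signChangePairs f).ncard =
    (G.edgeSet ∩ signChangePairs f).ncard - _
  rw [SimpleGraph.edgeSet_deleteEdges, Set.sdiff_inter_right_comm,
    ← Set.ncard_sdiff (Set.inter_subset_inter_left _ hS)]
  congr 1
  grind

theorem ncard_range_inter_signChangePairs {ι V K : Type*} [Field K] [LinearOrder K]
    [IsStrictOrderedRing K] {u v : ι → V} (hinj : Function.Injective fun j => s(u j, v j))
    (f : V → K) :
    (Set.range (fun j => s(u j, v j)) ∩ signChangePairs f).ncard =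
      {j | f (v j) / f (u j) < 0}.ncard := by
  rw [← Set.image_preimage_eq_range_inter, Set.ncard_image_of_injective _ hinj]
  congr 1
  ext j
  change s(u j, v j) ∈ signChangePairs f ↔ f (v j) / f (u j) < 0
  rw [mk_mem_signChangePairs, mul_neg_iff, div_neg_iff]
  tauto

theorem eigenvalue_transfer_to_cut_tree_general {N β : ℕ} (G : SimpleGraph (Fin N))
    [DecidableRel G.Adj] (q : Fin N → ℝ) (uE vE : Fin β → Fin N)
    (hadj : ∀ j, G.Adj (uE j) (vE j)) (hinj : Function.Injective fun j => s(uE j, vE j))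
    (hcard : G.edgeFinset.card < β + N) (f : Fin N → ℝ) (μ : ℝ)
    (heig : schrodOp G q *ᵥ f = μ • f) (hf0 : ∀ v, f v ≠ 0) :
    μ = sE (schrodCut G q uE vE fun j => f (vE j) / f (uE j))
      (signChanges G f - {j | f (vE j) / f (uE j) < 0}.ncard) := by
  set S := Set.range fun j => s(uE j, vE j)
  have hS : S ⊆ G.edgeSet := Set.range_subset_iff.mpr hadj
  have hT : (G.deleteEdges S).edgeSet.ncard < N := by
    have hcut : (G.deleteEdges S).edgeSet.ncard + S.ncard = G.edgeSet.ncard := by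
      rw [SimpleGraph.edgeSet_deleteEdges]
      exact Set.ncard_sdiff_add_ncard_of_subset hS
    rw [Set.ncard_range_of_injective hinj, Nat.card_fin, ← SimpleGraph.coe_edgeFinset G,
      Set.ncard_coe_finset] at hcut
    omega
  rw [← ncard_range_inter_signChangePairs hinj, ← signChanges_deleteEdges G hS]
  refine (sE_signChanges_eq hT (isHermitian_iff_isSymm.mpr (isSymm_schrodCut G q uE vE _))
    ?_ ?_ ?_ hf0).symm
  · intro u v huv
    rw [schrodCut_apply_of_ne G q _ hadj hinj huv.ne]
    split_ifs <;> norm_num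
  · intro u v huv hnadj
    rw [schrodCut_apply_of_ne G q _ hadj hinj huv, if_neg]
    rwa [← SimpleGraph.deleteEdges_adj]
  · rw [schrodCut_mulVec G q (fun j => (hadj j).ne) hf0, heig]

/-- transfer of the eigenvalue to the cut (tree) operator.  If `f` is the
eigenvector of a simple eigenvalue `λ_n(H(Γ))` (1-based `n`), nonvanishing on vertices, with
`φ` sign changes, and the edges `e_j = (uE j, vE j)` outside a spanning tree are cut with
`γ̃_j = f_{v_j}/f_{u_j}`, of which `p` are negative, then `λ_n(H(Γ))` is the `(φ-p+1)`-th
smallest eigenvalue of the cut operator (0-based index `φ - p`). -/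
theorem eigenvalue_transfer_to_cut_tree {N β : ℕ} (G : SimpleGraph (Fin N))
    [DecidableRel G.Adj] (hconn : G.Connected) (q : Fin N → ℝ)
    (uE vE : Fin β → Fin N)
    (hadj : ∀ j, G.Adj (uE j) (vE j))
    (hdistinct : ∀ i j, s(uE i, vE i) = s(uE j, vE j) → i = j)
    (htree : (G.deleteEdges {e | ∃ j, e = s(uE j, vE j)}).IsTree)
    (hβ : β + N = G.edgeFinset.card + 1)
    (n : ℕ) (hn1 : 1 ≤ n) (hn2 : n ≤ N)
    (f : Fin N → ℝ)
    (heig : (schrodOp G q).mulVec f = sE (schrodOp G q) (n - 1) • f)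
    (hsimple : Module.finrank ℝ
      (Module.End.eigenspace (Matrix.toLin' (schrodOp G q)) (sE (schrodOp G q) (n - 1))) = 1)
    (hf0 : ∀ v, f v ≠ 0)
    (φ p : ℕ) (hφ : φ = signChanges G f)
    (hp : p = {j : Fin β | f (vE j) / f (uE j) < 0}.ncard) :
    sE (schrodOp G q) (n - 1) =
      sE (schrodCut G q uE vE (fun j => f (vE j) / f (uE j))) (φ - p) := by
  subst hφ hp
  exact eigenvalue_transfer_to_cut_tree_general G q uE vE hadj (fun i j => hdistinct i j)
    (by omega) f _ heig hf0
end
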